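/- arXiv:1205.5424 — 5 statements merged into one kernel-verified Lean document; each statement's English description precedes it below -/
import Mathlib

section
/- Let M and M' be matroids on the same finite ground set E, with rank functions r and r'. Then the following are equivalent: (iii) there is no circuit C of M and cocircuit D of M' with |C ∩ D| = 1; (iv) for all Y ⊆ X ⊆ E, one has r'(X) - r'(Y) ≤ r(X) - r(Y) (equivalently, r(Y) - r'(Y) ≤ r(X) - r'(X)). (These are two of the equivalent defining conditions for the identity map to be a matroid strong map, i.e. for the pair M → M' to be a matroid perspective.) -/
open Set

/-- The rank of a set in a matroid: the largest cardinality of an independent subset. -/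
noncomputable def Matroid.rk' {α : Type*} (M : Matroid α) (X : Set α) : ℕ :=
  sSup {n | ∃ I, M.Indep I ∧ I ⊆ X ∧ I.ncard = n}

/-- A circuit of a matroid is a minimal dependent set. -/
def Matroid.IsCircuit' {α : Type*} (M : Matroid α) (C : Set α) : Prop :=
  Minimal M.Dep C

/-- A cocircuit of a matroid is a circuit of the dual matroid. -/
def Matroid.IsCocircuit' {α : Type*} (M : Matroid α) (D : Set α) : Prop :=
  M✶.IsCircuit' D

theorem rk'_cast {α : Type*} (M : Matroid α) (hfin : M.E.Finite) (X : Set α) :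
    (M.rk' X : ℕ∞) = M.eRk X := by
  obtain ⟨I, hI⟩ := M.exists_isBasis' X
  have hIf : I.Finite := hfin.subset hI.indep.subset_ground
  have key : M.rk' X = I.ncard := by
    apply IsGreatest.csSup_eq
    refine ⟨⟨I, hI.indep, hI.subset, rfl⟩, ?_⟩
    rintro n ⟨J, hJ, hJX, rfl⟩
    have h1 := hJ.encard_le_eRk_of_subset hJX
    rw [← hI.encard_eq_eRk, ← hIf.cast_ncard_eq,
      ← (hfin.subset hJ.subset_ground).cast_ncard_eq] at h1
    exact_mod_cast h1
  rw [key, ← hI.encard_eq_eRk, hIf.cast_ncard_eq]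

theorem rk'_insert_mem {α : Type*} (M : Matroid α) (hfin : M.E.Finite) {X : Set α} {e : α}
    (he : e ∈ M.closure X) : M.rk' (insert e X) = M.rk' X := by
  have h : (M.rk' (insert e X) : ℕ∞) = M.rk' X := by
    rw [rk'_cast M hfin, rk'_cast M hfin, ← M.eRk_insert_closure_eq, insert_eq_of_mem he,
      M.eRk_closure_eq]
  exact_mod_cast h

theorem rk'_insert_notMem {α : Type*} (M : Matroid α) (hfin : M.E.Finite) {X : Set α} {e : α}
    (he : e ∈ M.E) (h' : e ∉ M.closure X) : M.rk' (insert e X) = M.rk' X + 1 := by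
  have h : (M.rk' (insert e X) : ℕ∞) = M.rk' X + 1 := by
    rw [rk'_cast M hfin, rk'_cast M hfin, M.eRk_insert_eq_add_one ⟨he, h'⟩]
  exact_mod_cast h

theorem exists_cocircuit_aux {α : Type*} (M : Matroid α) {Y : Set α} {e : α} (hY : Y ⊆ M.E)
    (he : e ∈ M.E) (h' : e ∉ M.closure Y) : ∃ D, M.IsCocircuit D ∧ e ∈ D ∧ Disjoint Y D := by
  obtain ⟨I, hI⟩ := M.exists_isBasis Y
  rw [← hI.closure_eq_closure] at h'
  have heI : e ∉ I := fun h => h' (M.mem_closure_of_mem h hI.indep.subset_ground)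
  have hi : M.Indep (insert e I) := (hI.indep.insert_indep_iff_of_notMem heI).2 ⟨he, h'⟩
  obtain ⟨B, hB, hIB⟩ := hi.exists_isBase_superset
  have heB : e ∈ B := hIB (mem_insert _ _)
  refine ⟨_, hB.compl_closure_sdiff_singleton_isCocircuit heB, ⟨he, ?_⟩, ?_⟩
  · exact hB.indep.notMem_closure_sdiff_of_mem heB
  · rw [Set.disjoint_left]
    intro y hy hy2
    refine hy2.2 (M.closure_subset_closure ?_ (hI.subset_closure hy))
    intro x hx
    exact ⟨hIB (mem_insert_of_mem _ hx), fun h => heI (h ▸ hx)⟩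

/-- for matroids `M`, `M'` on the same finite ground set, the condition that no
circuit of `M` meets a cocircuit of `M'` in exactly one element is equivalent to the
rank inequality `r'(X) - r'(Y) ≤ r(X) - r(Y)` for all `Y ⊆ X ⊆ E`. -/
theorem statement0 {α : Type*} (M M' : Matroid α) (hE : M.E = M'.E) (hfin : M.E.Finite) :
    (¬ ∃ C D : Set α, M.IsCircuit' C ∧ M'.IsCocircuit' D ∧ (C ∩ D).ncard = 1) ↔
      (∀ ⦃Y X : Set α⦄, Y ⊆ X → X ⊆ M.E →
        (M'.rk' X : ℤ) - M'.rk' Y ≤ (M.rk' X : ℤ) - M.rk' Y) := by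
  have hfin' : M'.E.Finite := hE ▸ hfin
  constructor
  · intro h
    have hcl : ∀ (Y : Set α) (e : α), Y ⊆ M.E → e ∈ M.closure Y → e ∈ M'.closure Y := by
      intro Y e hY he
      have hY' : Y ⊆ M'.E := hE ▸ hY
      by_contra hne
      have heY : e ∉ Y := fun h => hne (M'.mem_closure_of_mem h hY')
      obtain ⟨C, hCY, hC, heC⟩ := (M.mem_closure_iff_exists_isCircuit heY).1 he
      obtain ⟨D, hD, heD, hdj⟩ := exists_cocircuit_aux M' hY'
        (hE ▸ M.closure_subset_ground Y he) hne
      refine h ⟨C, D, hC, hD, ?_⟩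
      rw [Set.ncard_eq_one]
      refine ⟨e, subset_antisymm ?_ (by simp [heC, heD])⟩
      rintro x ⟨hxC, hxD⟩
      rcases hCY hxC with rfl | hx
      · rfl
      · exact (Set.disjoint_left.1 hdj hx hxD).elim
    intro Y X hYX hX
    have hXf : (X \ Y).Finite := (hfin.subset hX).subset sdiff_subset
    have main : ∀ Z : Set α, Z.Finite → Z ⊆ M.E →
        (M'.rk' (Z ∪ Y) : ℤ) - M'.rk' Y ≤ (M.rk' (Z ∪ Y) : ℤ) - M.rk' Y := by
      intro Z hZ
      induction Z, hZ using Set.Finite.induction_on with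
      | empty => simp
      | @insert e Z _ _ ih =>
        intro hZE
        have heE : e ∈ M.E := hZE (mem_insert _ _)
        have hZE' : Z ⊆ M.E := (subset_insert _ _).trans hZE
        have ih := ih hZE'
        rw [Set.insert_union]
        by_cases h1 : e ∈ M.closure (Z ∪ Y)
        · rw [rk'_insert_mem M hfin h1, rk'_insert_mem M' hfin'
            (hcl _ _ (union_subset hZE' (hYX.trans hX)) h1)]
          exact ih
        · rw [rk'_insert_notMem M hfin heE h1]
          by_cases h2 : e ∈ M'.closure (Z ∪ Y)
          · rw [rk'_insert_mem M' hfin' h2]; push_cast; linarith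
          · rw [rk'_insert_notMem M' hfin' (hE ▸ heE) h2]; push_cast; linarith
    have := main _ hXf (sdiff_subset.trans hX)
    rwa [Set.sdiff_union_of_subset hYX] at this
  · rintro h ⟨C, D, hC, hD, hCD⟩
    have hC : M.IsCircuit C := hC
    have hD : M'.IsCocircuit D := hD
    obtain ⟨e, heq⟩ := Set.ncard_eq_one.1 hCD
    have heCD : e ∈ C ∩ D := by rw [heq]; rfl
    have hins : insert e (C \ {e}) = C := by simp [Set.insert_eq_of_mem heCD.1]
    have h1 := h (Set.sdiff_subset : C \ {e} ⊆ C) hC.subset_ground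
    have h2 := rk'_insert_mem M hfin (hC.mem_closure_sdiff_singleton_of_mem heCD.1)
    rw [hins] at h2
    have h3 : e ∈ M'.closure (C \ {e}) := by
      by_contra h3
      have h4 := rk'_insert_notMem M' hfin' (hE ▸ hC.subset_ground heCD.1) h3
      rw [hins] at h4
      rw [h2, h4] at h1
      push_cast at h1
      linarith
    obtain ⟨C', hC's, hC', heC'⟩ :=
      (M'.mem_closure_iff_exists_isCircuit (by simp)).1 h3
    rw [hins] at hC's
    refine hC'.inter_isCocircuit_ne_singleton hD (e := e) ?_
    refine subset_antisymm ?_ (by simp [heC', heCD.2])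
    rw [← heq]
    exact inter_subset_inter_left _ hC's
end

section
/- Every matroid perspective factorizes: if M → M' is a matroid perspective on a finite ground set E ⊆ α, then there exist a natural number k and a matroid N on the type α ⊕ Fin k whose ground set is (Sum.inl '' E) ∪ (Sum.inr '' Set.univ), such that deleting the elements of Sum.inr '' Set.univ from N yields the image of M under Sum.inl, and contracting the elements of Sum.inr '' Set.univ in N yields the image of M' under Sum.inl. -/
open Set

/-- Deletion of a set from a matroid. -/
def Matroid.delete' {α : Type*} (M : Matroid α) (D : Set α) : Matroid α :=
  M.restrict (M.E \ D)

/-- Contraction of a set in a matroid, defined by duality. -/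
def Matroid.contract' {α : Type*} (M : Matroid α) (C : Set α) : Matroid α :=
  (M✶.delete' C)✶

/-- `M → M'` is a matroid perspective (`M'` is a quotient of `M`):
`r'(X) - r'(Y) ≤ r(X) - r(Y)` for all `Y ⊆ X ⊆ E`. -/
def Matroid.IsPersp {α : Type*} (M M' : Matroid α) : Prop :=
  M.E = M'.E ∧ ∀ ⦃Y X : Set α⦄, Y ⊆ X → X ⊆ M.E →
    (M'.rk' X : ℤ) - M'.rk' Y ≤ (M.rk' X : ℤ) - M.rk' Y

theorem cast_rk_aux {α : Type*} (M : Matroid α) {X : Set α} (hX : X.Finite) :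
    (M.rk' X : ℕ∞) = M.eRk X := by
  obtain ⟨I, hI⟩ := M.exists_isBasis' X
  have hIf : I.Finite := hX.subset hI.subset
  rw [← hI.encard_eq_eRk, ← hIf.cast_ncard_eq]
  congr 1
  apply le_antisymm
  · refine csSup_le ⟨I.ncard, I, hI.indep, hI.subset, rfl⟩ ?_
    rintro n ⟨J, hJ, hJX, rfl⟩
    have h := hJ.encard_le_eRk_of_subset hJX
    rw [← hI.encard_eq_eRk, ← hIf.cast_ncard_eq, ← (hX.subset hJX).cast_ncard_eq] at h
    exact_mod_cast h
  · apply le_csSup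
    · refine ⟨X.ncard, ?_⟩
      rintro n ⟨J, hJ, hJX, rfl⟩
      exact ncard_le_ncard hJX hX
    · exact ⟨I, hI.indep, hI.subset, rfl⟩

theorem rk_indep_aux {α : Type*} (M : Matroid α) {X : Set α} (hX : X.Finite) :
    M.Indep X ↔ M.rk' X = X.ncard := by
  rw [Matroid.indep_iff_eRk_eq_encard_of_finite hX, ← cast_rk_aux M hX, ← hX.cast_ncard_eq]
  exact_mod_cast Iff.rfl

theorem rk_le_ncard_aux {α : Type*} (M : Matroid α) {X : Set α} (hX : X.Finite) :
    M.rk' X ≤ X.ncard := by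
  have := M.eRk_le_encard X
  rw [← cast_rk_aux M hX, ← hX.cast_ncard_eq] at this
  exact_mod_cast this

theorem rk_mono_aux {α : Type*} (M : Matroid α) {X Y : Set α} (hY : Y.Finite) (h : X ⊆ Y) :
    M.rk' X ≤ M.rk' Y := by
  have := M.eRk_mono h
  rw [← cast_rk_aux M hY, ← cast_rk_aux M (hY.subset h)] at this
  exact_mod_cast this

theorem rk_empty_aux {α : Type*} (M : Matroid α) : M.rk' ∅ = 0 := by
  have := rk_le_ncard_aux M (finite_empty)
  simpa using this

theorem rk_lt_aux {α : Type*} (M : Matroid α) {X Y : Set α} (hX : X.Finite) (hY : Y.Finite)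
    (h : M.rk' X < M.rk' Y) : ∃ e ∈ Y, M.rk' (insert e X) = M.rk' X + 1 := by
  have h1 : M.eRk X < M.eRk Y := by
    rw [← cast_rk_aux M hY, ← cast_rk_aux M hX]
    exact_mod_cast h
  obtain ⟨e, he, h2⟩ := Matroid.exists_eRk_insert_eq_add_one_of_lt h1
  refine ⟨e, he.1, ?_⟩
  rw [← cast_rk_aux M hX, ← cast_rk_aux M (hX.insert e)] at h2
  exact_mod_cast h2

theorem ncard_sum_aux {α β : Type*} {S : Set (α ⊕ β)} (hS : S.Finite) :
    S.ncard = (Sum.inl ⁻¹' S).ncard + (Sum.inr ⁻¹' S).ncard := by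
  have h : S = Sum.inl '' (Sum.inl ⁻¹' S) ∪ Sum.inr '' (Sum.inr ⁻¹' S) := by
    ext (x | x) <;> simp
  conv_lhs => rw [h]
  rw [ncard_union_eq ?_ ((hS.preimage Sum.inl_injective.injOn).image _)
    ((hS.preimage Sum.inr_injective.injOn).image _), ncard_image_of_injective _ Sum.inl_injective,
    ncard_image_of_injective _ Sum.inr_injective]
  · rw [disjoint_left]
    rintro _ ⟨x, _, rfl⟩ ⟨y, _, h⟩
    simp at h

theorem pre_aux {α β : Type*} (e : α) (S : Set (α ⊕ β)) :
    Sum.inl ⁻¹' (insert (Sum.inl e) S) = insert e (Sum.inl ⁻¹' S) ∧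
    Sum.inr ⁻¹' (insert (Sum.inl e) S) = Sum.inr ⁻¹' S := by
  constructor <;> ext x <;> simp

theorem pre_aux2 {α β : Type*} (e : β) (S : Set (α ⊕ β)) :
    Sum.inr ⁻¹' (insert (Sum.inr e) S) = insert e (Sum.inr ⁻¹' S) ∧
    Sum.inl ⁻¹' (insert (Sum.inr e) S) = Sum.inl ⁻¹' S := by
  constructor <;> ext x <;> simp

/-- The independence predicate of the factorizing matroid. -/
def PIndep {α : Type*} (M M' : Matroid α) (k : ℕ) (S : Set (α ⊕ Fin k)) : Prop :=
  M.Indep (Sum.inl ⁻¹' S) ∧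
    (Sum.inl ⁻¹' S).ncard + (Sum.inr ⁻¹' S).ncard ≤ k + M'.rk' (Sum.inl ⁻¹' S)

theorem PIndep.subset_aux {α : Type*} {M M' : Matroid α} (hfin : M.E.Finite)
    (hq : M.IsPersp M') {k : ℕ} {S T : Set (α ⊕ Fin k)} (hT : PIndep M M' k T) (h : S ⊆ T) :
    PIndep M M' k S := by
  have hl : (Sum.inl ⁻¹' S : Set α) ⊆ Sum.inl ⁻¹' T := preimage_mono h
  have hr : (Sum.inr ⁻¹' S : Set (Fin k)) ⊆ Sum.inr ⁻¹' T := preimage_mono h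
  have hi := hT.1.subset hl
  refine ⟨hi, ?_⟩
  have h1 := hq.2 hl hT.1.subset_ground
  rw [(rk_indep_aux M (hfin.subset hT.1.subset_ground)).1 hT.1,
    (rk_indep_aux M (hfin.subset hi.subset_ground)).1 hi] at h1
  have h2 := ncard_le_ncard hr (toFinite _)
  have h3 := hT.2
  omega

theorem PIndep.aug_aux {α : Type*} {M M' : Matroid α} (hfin : M.E.Finite)
    (hq : M.IsPersp M') {k : ℕ} {S T : Set (α ⊕ Fin k)} (hS : PIndep M M' k S)
    (hT : PIndep M M' k T) (hSf : S.Finite) (hTf : T.Finite) (h : S.ncard < T.ncard) :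
    ∃ e ∈ T, e ∉ S ∧ PIndep M M' k (insert e S) := by
  rw [ncard_sum_aux hSf, ncard_sum_aux hTf] at h
  have hSl := hfin.subset hS.1.subset_ground
  have hTl := hfin.subset hT.1.subset_ground
  have hS2 := hS.2
  have hT2 := hT.2
  rcases hS2.lt_or_eq with hlt | heq
  · by_cases hss : (Sum.inr ⁻¹' T : Set (Fin k)) ⊆ Sum.inr ⁻¹' S
    · have h1 := ncard_le_ncard hss (toFinite _)
      have h2 : (Sum.inl ⁻¹' S : Set α).encard < (Sum.inl ⁻¹' T : Set α).encard := by
        rw [← hSl.cast_ncard_eq, ← hTl.cast_ncard_eq]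
        norm_cast
        omega
      obtain ⟨e, he, hi⟩ := hS.1.exists_insert_of_encard_lt hT.1 h2
      refine ⟨Sum.inl e, he.1, he.2, ?_⟩
      unfold PIndep
      rw [(pre_aux e S).1, (pre_aux e S).2]
      refine ⟨hi, ?_⟩
      have h3 := rk_mono_aux M' (hSl.insert e) (subset_insert e (Sum.inl ⁻¹' S))
      have h4 := ncard_insert_le e (Sum.inl ⁻¹' S)
      omega
    · obtain ⟨e, he, he'⟩ := not_subset.1 hss
      refine ⟨Sum.inr e, he, he', ?_⟩
      unfold PIndep
      rw [(pre_aux2 e S).1, (pre_aux2 e S).2]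
      refine ⟨hS.1, ?_⟩
      have h4 := ncard_insert_le e (Sum.inr ⁻¹' S)
      omega
  · obtain ⟨e, he, hr⟩ := rk_lt_aux M' hSl hTl (by omega)
    have heS : e ∉ (Sum.inl ⁻¹' S : Set α) := by
      intro hm
      rw [insert_eq_of_mem hm] at hr
      omega
    refine ⟨Sum.inl e, he, heS, ?_⟩
    unfold PIndep
    rw [(pre_aux e S).1, (pre_aux e S).2]
    have h1 := hq.2 (subset_insert e (Sum.inl ⁻¹' S))
      (insert_subset (hT.1.subset_ground he) hS.1.subset_ground)
    have h2 := rk_le_ncard_aux M (hSl.insert e)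
    have h3 := (rk_indep_aux M hSl).1 hS.1
    have h4 := ncard_insert_of_notMem heS hSl
    refine ⟨(rk_indep_aux M (hSl.insert e)).2 ?_, ?_⟩
    · omega
    · omega

theorem persp_indep_aux {α : Type*} {M M' : Matroid α} (hfin : M.E.Finite)
    (hq : M.IsPersp M') (X : Set α) :
    M'.Indep X ↔ M.Indep X ∧ X.ncard ≤ M'.rk' X := by
  constructor
  · intro h
    have hX : X ⊆ M.E := hq.1 ▸ h.subset_ground
    have hXf := hfin.subset hX
    have h1 := hq.2 (empty_subset X) hX
    have h2 := (rk_indep_aux M' hXf).1 h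
    have h3 := rk_le_ncard_aux M hXf
    rw [rk_empty_aux, rk_empty_aux] at h1
    exact ⟨(rk_indep_aux M hXf).2 (by omega), h2.ge⟩
  · rintro ⟨h, h1⟩
    have hXf := hfin.subset h.subset_ground
    exact (rk_indep_aux M' hXf).2 (le_antisymm (rk_le_ncard_aux M' hXf) h1)

/-- every matroid perspective on a finite ground set factorizes: there are a
natural number `k` and a matroid `N` on `α ⊕ Fin k`, with ground set the union of the image
of `E` and of the extra elements, such that deleting the extra elements yields `M` and
contracting them yields `M'`. -/
theorem statement2 {α : Type*} (M M' : Matroid α) (hfin : M.E.Finite)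
    (hq : M.IsPersp M') :
    ∃ (k : ℕ) (N : Matroid (α ⊕ Fin k)),
      N.E = (Sum.inl '' M.E) ∪ (Sum.inr '' Set.univ) ∧
      N.delete' (Sum.inr '' Set.univ) = M.map Sum.inl Sum.inl_injective.injOn ∧
      N.contract' (Sum.inr '' Set.univ) = M'.map Sum.inl Sum.inl_injective.injOn := by
  set k := M.E.ncard with hk
  have hE : ((Sum.inl '' M.E) ∪ (Sum.inr '' Set.univ) : Set (α ⊕ Fin k)).Finite :=
    (hfin.image _).union (toFinite _)
  have hg : ∀ ⦃S : Set (α ⊕ Fin k)⦄, PIndep M M' k S →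
      S ⊆ (Sum.inl '' M.E) ∪ (Sum.inr '' Set.univ) := by
    rintro S hS (x | x) hx
    · exact Or.inl ⟨x, hS.1.subset_ground hx, rfl⟩
    · exact Or.inr ⟨x, mem_univ _, rfl⟩
  let N : Matroid (α ⊕ Fin k) := (IndepMatroid.ofFinite hE (PIndep M M' k)
    (by simp [PIndep]) (fun S T hT h ↦ hT.subset_aux hfin hq h)
    (fun S T hS hT h ↦ hS.aug_aux hfin hq hT (hE.subset (hg hS)) (hE.subset (hg hT)) h)
    hg).matroid
  have hNi : ∀ S, N.Indep S ↔ PIndep M M' k S := fun S ↦ Iff.rfl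
  have hNE : N.E = (Sum.inl '' M.E) ∪ (Sum.inr '' Set.univ) := rfl
  have hdiff : N.E \ (Sum.inr '' Set.univ) = Sum.inl '' M.E := by
    rw [hNE]
    ext (x | x) <;> simp
  have hpl : ∀ X : Set α, (Sum.inl ⁻¹' (Sum.inl '' X : Set (α ⊕ Fin k))) = X :=
    fun X ↦ preimage_image_eq _ Sum.inl_injective
  have hprl : ∀ X : Set α, (Sum.inr ⁻¹' (Sum.inl '' X : Set (α ⊕ Fin k))) = ∅ := by
    intro X; ext x; simp
  have hdis : ∀ X : Set α,
      Disjoint (Sum.inl '' X : Set (α ⊕ Fin k)) (Sum.inr '' Set.univ) := by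
    intro X
    rw [disjoint_left]
    rintro _ ⟨x, _, rfl⟩ ⟨y, _, h⟩
    simp at h
  refine ⟨k, N, hNE, ?_, ?_⟩
  · refine Matroid.ext_indep hdiff ?_
    intro I hI
    obtain ⟨X, hX, rfl⟩ := subset_image_iff.1 (hI.trans hdiff.subset)
    rw [Matroid.map_image_indep_iff hX]
    change (N.delete (Sum.inr '' Set.univ)).Indep _ ↔ _
    rw [Matroid.delete_indep_iff, and_iff_left (hdis X), hNi, PIndep, hpl, hprl]
    refine and_iff_left ?_
    have := ncard_le_ncard hX hfin
    rw [ncard_empty]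
    omega
  · have hK : N.Indep (Sum.inr '' Set.univ) := by
      rw [hNi]
      have h1 : (Sum.inl ⁻¹' (Sum.inr '' univ : Set (α ⊕ Fin k))) = ∅ := by
        ext x; simp
      have h2 : (Sum.inr ⁻¹' (Sum.inr '' univ : Set (α ⊕ Fin k))) = univ := by
        ext x; simp
      rw [PIndep, h1, h2]
      simp
    refine Matroid.ext_indep (hdiff.trans (by rw [Matroid.map_ground, hq.1])) ?_
    intro I hI
    obtain ⟨X, hX, rfl⟩ := subset_image_iff.1 (hI.trans hdiff.subset)
    rw [Matroid.map_image_indep_iff (hq.1 ▸ hX)]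
    change (N.contract (Sum.inr '' Set.univ)).Indep _ ↔ _
    have h1 : (Sum.inl ⁻¹' (Sum.inl '' X ∪ Sum.inr '' univ : Set (α ⊕ Fin k))) = X := by
      ext x; simp
    have h2 : (Sum.inr ⁻¹' (Sum.inl '' X ∪ Sum.inr '' univ : Set (α ⊕ Fin k))) = univ := by
      ext x; simp
    rw [hK.contract_indep_iff, and_iff_right (hdis X), hNi, PIndep, h1, h2,
      persp_indep_aux hfin hq, ncard_univ, Nat.card_fin, add_comm X.ncard, add_le_add_iff_left]
end

section
/- (4-variable expansion of the Tutte polynomial in orientation activities, realizable case.) For every vector configuration v : Fin n → V and all real numbers x, u, y, w: t(x+u, y+w) = ∑_{A ⊆ Fin n} x^{θ*(A)} · u^{θ̄*(A)} · y^{θ(A)} · w^{θ̄(A)}. -/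
open Set Submodule

/-- The reorientation of the vector configuration `v` on the subset `A`:
vectors indexed by `A` are negated. -/
def reorient {n : ℕ} {V : Type*} [AddCommGroup V] (v : Fin n → V) (A : Finset (Fin n)) :
    Fin n → V :=
  fun i => if i ∈ A then -v i else v i

/-- `a` is orientation-active for the configuration `w`: it is the smallest element of a
positive circuit, i.e. there is a nonnegative linear dependence with positive coefficient
at `a` and zero coefficients below `a`. -/
def OActive {n : ℕ} {V : Type*} [AddCommGroup V] [Module ℝ V]
    (w : Fin n → V) (a : Fin n) : Prop :=
  ∃ c : Fin n → ℝ, (∀ i, 0 ≤ c i) ∧ (∑ i, c i • w i) = 0 ∧ 0 < c a ∧ ∀ i < a, c i = 0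

/-- `a` is dually orientation-active for the configuration `w`: it is the smallest element of
a positive cocircuit, i.e. there is a linear functional, nonnegative on the configuration,
positive at `w a` and vanishing on the vectors below `a`. -/
def ODualActive {n : ℕ} {V : Type*} [AddCommGroup V] [Module ℝ V]
    (w : Fin n → V) (a : Fin n) : Prop :=
  ∃ f : V →ₗ[ℝ] ℝ, (∀ i, 0 ≤ f (w i)) ∧ 0 < f (w a) ∧ ∀ i < a, f (w i) = 0

/-- `θ*(A)`: the number of elements outside `A` that are dually orientation-active for `v_A`. -/
noncomputable def thetaStar {n : ℕ} {V : Type*} [AddCommGroup V] [Module ℝ V]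
    (v : Fin n → V) (A : Finset (Fin n)) : ℕ :=
  {a : Fin n | a ∉ A ∧ ODualActive (reorient v A) a}.ncard

/-- `θ̄*(A)`: the number of elements of `A` that are dually orientation-active for `v_A`. -/
noncomputable def thetaStarBar {n : ℕ} {V : Type*} [AddCommGroup V] [Module ℝ V]
    (v : Fin n → V) (A : Finset (Fin n)) : ℕ :=
  {a : Fin n | a ∈ A ∧ ODualActive (reorient v A) a}.ncard

/-- `θ(A)`: the number of elements outside `A` that are orientation-active for `v_A`. -/
noncomputable def theta {n : ℕ} {V : Type*} [AddCommGroup V] [Module ℝ V]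
    (v : Fin n → V) (A : Finset (Fin n)) : ℕ :=
  {a : Fin n | a ∉ A ∧ OActive (reorient v A) a}.ncard

/-- `θ̄(A)`: the number of elements of `A` that are orientation-active for `v_A`. -/
noncomputable def thetaBar {n : ℕ} {V : Type*} [AddCommGroup V] [Module ℝ V]
    (v : Fin n → V) (A : Finset (Fin n)) : ℕ :=
  {a : Fin n | a ∈ A ∧ OActive (reorient v A) a}.ncard

/-- The rank of a set of indices: the dimension of the span of the corresponding vectors. -/
noncomputable def vrank {n : ℕ} {V : Type*} [AddCommGroup V] [Module ℝ V]
    (v : Fin n → V) (S : Set (Fin n)) : ℕ :=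
  Module.finrank ℝ ↥(span ℝ (v '' S))

/-- The Tutte polynomial of the matroid realized by the configuration `v`:
`t(x,y) = ∑_{A ⊆ Fin n} (x-1)^(r(E) - r(A)) * (y-1)^(|A| - r(A))`. -/
noncomputable def tutteV {n : ℕ} {V : Type*} [AddCommGroup V] [Module ℝ V]
    (v : Fin n → V) (x y : ℝ) : ℝ :=
  ∑ A : Finset (Fin n),
    (x - 1) ^ (vrank v Set.univ - vrank v ↑A) * (y - 1) ^ (A.card - vrank v ↑A)

section aux
universe uu
variable {n : ℕ} {V : Type uu} [AddCommGroup V] [Module ℝ V]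

theorem farkas6 : ∀ (n : ℕ) (p : Fin n → V) (w : V),
    (∃ c : Fin n → ℝ, (∀ i, 0 ≤ c i) ∧ ∑ i, c i • p i = w) ∨
    (∃ f : V →ₗ[ℝ] ℝ, (∀ i, 0 ≤ f (p i)) ∧ f w < 0) := by
  intro n
  induction n with
  | zero =>
    intro p w
    by_cases hw : w = 0
    · left; exact ⟨0, by simp, by simp [hw]⟩
    · right
      obtain ⟨f, hf, -⟩ := Submodule.exists_le_ker_of_notMem (p := (⊥ : Submodule ℝ V)) (v := w)
        (by simpa using hw)
      refine ⟨-(f w) • f, fun i => i.elim0, ?_⟩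
      have : 0 < f w * f w := mul_self_pos.2 hf
      simpa using this
  | succ n ih =>
    intro p w
    rcases ih (fun i => p i.castSucc) w with ⟨c, hc, hs⟩ | ⟨f, hf, hw⟩
    · left
      refine ⟨Fin.snoc c 0, ?_, ?_⟩
      · intro i; refine Fin.lastCases ?_ (fun j => ?_) i <;> simp [hc]
      · simp [Fin.sum_univ_castSucc, hs]
    · by_cases hl : 0 ≤ f (p (Fin.last n))
      · right
        exact ⟨f, fun i => Fin.lastCases hl hf i, hw⟩
      · push Not at hl
        set z := p (Fin.last n) with hz
        have hne : f z ≠ 0 := hl.ne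
        let π : V →ₗ[ℝ] V := LinearMap.id - (f.smulRight ((f z)⁻¹ • z))
        have hπ : ∀ x, π x = x - (f x) • ((f z)⁻¹ • z) := fun x => by simp [π]
        rcases ih (fun i => π (p i.castSucc)) (π w) with ⟨c, hc, hs⟩ | ⟨g, hg, hgw⟩
        · left
          refine ⟨Fin.snoc c (f w * (f z)⁻¹ - ∑ i, c i * f (p i.castSucc) * (f z)⁻¹), ?_, ?_⟩
          · intro i; refine Fin.lastCases ?_ (fun j => ?_) i
            · simp only [Fin.snoc_last]
              have h1 : 0 ≤ f w * (f z)⁻¹ :=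
                mul_nonneg_of_nonpos_of_nonpos hw.le (inv_nonpos.2 hl.le)
              have h2 : ∑ i, c i * f (p i.castSucc) * (f z)⁻¹ ≤ 0 :=
                Finset.sum_nonpos fun i _ =>
                  mul_nonpos_of_nonneg_of_nonpos (mul_nonneg (hc i) (hf i)) (inv_nonpos.2 hl.le)
              linarith
            · simp [hc]
          · simp only [hπ, smul_sub, Finset.sum_sub_distrib] at hs
            simp only [Fin.sum_univ_castSucc, Fin.snoc_castSucc, Fin.snoc_last, ← hz, sub_smul,
              Finset.sum_smul, mul_smul]
            rw [sub_eq_iff_eq_add] at hs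
            rw [hs]; abel
        · right
          refine ⟨g.comp π, fun i => Fin.lastCases ?_ hg i, hgw⟩
          simp [hπ, ← hz, smul_smul, hne]

/-- `z` positive circuit or positive cocircuit. -/
theorem farkas6' (p : Fin n → V) (z : V) :
    (∃ c : Fin n → ℝ, (∀ i, 0 ≤ c i) ∧ ∑ i, c i • p i + z = 0) ∨
    (∃ f : V →ₗ[ℝ] ℝ, (∀ i, 0 ≤ f (p i)) ∧ 0 < f z) := by
  rcases farkas6 n p (-z) with ⟨c, hc, hs⟩ | ⟨f, hf, hw⟩
  · left; exact ⟨c, hc, by simp [hs]⟩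
  · right; exact ⟨f, hf, by simpa using hw⟩

theorem oact_snoc (p : Fin n → V) (z : V) (a : Fin n) :
    OActive (Fin.snoc (α := fun _ => V) p z) a.castSucc ↔
    ∃ (c : Fin n → ℝ) (t : ℝ), (∀ i, 0 ≤ c i) ∧ 0 ≤ t ∧ ∑ i, c i • p i + t • z = 0 ∧
      0 < c a ∧ ∀ i < a, c i = 0 := by
  constructor
  · rintro ⟨c, h1, h2, h3, h4⟩
    refine ⟨fun i => c i.castSucc, c (Fin.last n), fun i => h1 _, h1 _, ?_, h3, fun i hi => h4 _ ?_⟩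
    · simpa [Fin.sum_univ_castSucc] using h2
    · simpa using hi
  · rintro ⟨c, t, h1, h2, h3, h4, h5⟩
    refine ⟨Fin.snoc c t, fun i => ?_, ?_, by simpa using h4, fun i => ?_⟩
    · refine Fin.lastCases ?_ (fun j => ?_) i <;> simp [*]
    · simpa [Fin.sum_univ_castSucc] using h3
    · refine Fin.lastCases ?_ (fun j => ?_) i
      · intro h; exact absurd h (by simp [Fin.le_last])
      · intro h; simpa using h5 j (by simpa using h)

theorem odual_snoc (p : Fin n → V) (z : V) (a : Fin n) :
    ODualActive (Fin.snoc (α := fun _ => V) p z) a.castSucc ↔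
    ∃ f : V →ₗ[ℝ] ℝ, (∀ i, 0 ≤ f (p i)) ∧ 0 ≤ f z ∧ 0 < f (p a) ∧ ∀ i < a, f (p i) = 0 := by
  constructor
  · rintro ⟨f, h1, h3, h4⟩
    refine ⟨f, fun i => by simpa using h1 i.castSucc, by simpa using h1 (Fin.last n),
      by simpa using h3, fun i hi => by simpa using h4 i.castSucc (by simpa using hi)⟩
  · rintro ⟨f, h1, h2, h4, h5⟩
    refine ⟨f, fun i => ?_, by simpa using h4, fun i => ?_⟩
    · refine Fin.lastCases ?_ (fun j => ?_) i <;> simp [*]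
    · refine Fin.lastCases ?_ (fun j => ?_) i
      · intro h; exact absurd h (by simp [Fin.le_last])
      · intro h; simpa using h5 j (by simpa using h)

theorem oact_last (p : Fin n → V) (z : V) :
    OActive (Fin.snoc (α := fun _ => V) p z) (Fin.last n) ↔ z = 0 := by
  constructor
  · rintro ⟨c, h1, h2, h3, h4⟩
    have : ∀ i : Fin n, c i.castSucc = 0 := fun i => h4 _ (Fin.castSucc_lt_last i)
    simpa [Fin.sum_univ_castSucc, this, h3.ne'] using h2
  · rintro rfl
    refine ⟨Fin.snoc (0 : Fin n → ℝ) 1, fun i => ?_, ?_, by simp, fun i => ?_⟩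
    · refine Fin.lastCases ?_ (fun j => ?_) i <;> simp
    · simp [Fin.sum_univ_castSucc]
    · refine Fin.lastCases ?_ (fun j => ?_) i <;> simp

theorem odual_last (p : Fin n → V) (z : V) :
    ODualActive (Fin.snoc (α := fun _ => V) p z) (Fin.last n) ↔
      z ∉ span ℝ (Set.range p) := by
  constructor
  · rintro ⟨f, h1, h3, h4⟩ hz
    have : span ℝ (Set.range p) ≤ LinearMap.ker f := by
      rw [span_le]; rintro _ ⟨i, rfl⟩
      simpa using h4 i.castSucc (Fin.castSucc_lt_last i)
    have := this hz
    simp only [LinearMap.mem_ker] at this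
    simp [this] at h3
  · intro hz
    obtain ⟨f, hf, hk⟩ := Submodule.exists_le_ker_of_notMem hz
    have hp : ∀ i, f (p i) = 0 := fun i => hk (subset_span ⟨i, rfl⟩)
    refine ⟨(f z) • f, fun i => ?_, ?_, fun i => ?_⟩
    · refine Fin.lastCases ?_ (fun j => ?_) i
      · simpa using mul_self_nonneg _
      · simp [hp]
    · simpa using hf
    · refine Fin.lastCases ?_ (fun j => ?_) i <;> simp [hp]

theorem oact_quot (p : Fin n → V) (z : V) (a : Fin n) :
    OActive (fun i => (span ℝ {z}).mkQ (p i)) a ↔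
    ∃ (c : Fin n → ℝ) (t : ℝ), (∀ i, 0 ≤ c i) ∧ ∑ i, c i • p i + t • z = 0 ∧
      0 < c a ∧ ∀ i < a, c i = 0 := by
  have key : ∀ c : Fin n → ℝ, ∑ i, c i • (span ℝ {z}).mkQ (p i) = 0 ↔
      ∃ t : ℝ, ∑ i, c i • p i + t • z = 0 := by
    intro c
    have : ∑ i, c i • (span ℝ {z}).mkQ (p i) = (span ℝ {z}).mkQ (∑ i, c i • p i) := by
      simp only [map_sum, map_smul]
    rw [this, Submodule.mkQ_apply, Submodule.Quotient.mk_eq_zero, mem_span_singleton]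
    constructor
    · rintro ⟨t, h⟩; exact ⟨-t, by rw [← h]; simp⟩
    · rintro ⟨t, h⟩; exact ⟨-t, by rw [neg_smul, eq_comm]; exact eq_neg_of_add_eq_zero_left h⟩
  constructor
  · rintro ⟨c, h1, h2, h3, h4⟩
    obtain ⟨t, ht⟩ := (key c).1 h2
    exact ⟨c, t, h1, ht, h3, h4⟩
  · rintro ⟨c, t, h1, h2, h3, h4⟩
    exact ⟨c, h1, (key c).2 ⟨t, h2⟩, h3, h4⟩

theorem odual_quot (p : Fin n → V) (z : V) (a : Fin n) :
    ODualActive (fun i => (span ℝ {z}).mkQ (p i)) a ↔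
    ∃ f : V →ₗ[ℝ] ℝ, (∀ i, 0 ≤ f (p i)) ∧ f z = 0 ∧ 0 < f (p a) ∧ ∀ i < a, f (p i) = 0 := by
  constructor
  · rintro ⟨f, h1, h3, h4⟩
    refine ⟨f.comp (span ℝ {z}).mkQ, h1, ?_, h3, h4⟩
    have : (span ℝ {z}).mkQ z = 0 := by
      rw [Submodule.mkQ_apply, Submodule.Quotient.mk_eq_zero]; exact mem_span_singleton_self z
    simp only [LinearMap.comp_apply, this, map_zero]
  · rintro ⟨f, h1, h2, h4, h5⟩
    have hk : span ℝ {z} ≤ LinearMap.ker f := by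
      rw [span_le]; rintro _ rfl; exact h2
    refine ⟨(span ℝ {z}).liftQ f hk, ?_, ?_, ?_⟩ <;> simpa

/-- primal dichotomy -/
theorem oact_split (p : Fin n → V) (z : V) :
    (∀ a, OActive (Fin.snoc (α := fun _ => V) p z) a.castSucc → OActive p a) ∨
    (∀ a, OActive (Fin.snoc (α := fun _ => V) p (-z)) a.castSucc → OActive p a) := by
  by_contra! h
  obtain ⟨⟨a, ha, ha'⟩, b, hb, hb'⟩ := h
  rw [oact_snoc] at ha hb
  obtain ⟨c, s, hc, hs, hcz, hca, hc0⟩ := ha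
  obtain ⟨d, t, hd, ht, hdz, hdb, hd0⟩ := hb
  have hs' : 0 < s := lt_of_le_of_ne hs fun h => ha' ⟨c, hc, by simpa [← h] using hcz, hca, hc0⟩
  have ht' : 0 < t := lt_of_le_of_ne ht fun h => hb' ⟨d, hd, by simpa [← h] using hdz, hdb, hd0⟩
  have e1 : ∀ i, 0 ≤ t * c i + s * d i := fun i =>
    add_nonneg (mul_nonneg ht (hc i)) (mul_nonneg hs (hd i))
  have e2 : ∑ i, (t * c i + s * d i) • p i = 0 := by
    have : ∑ i, (t * c i + s * d i) • p i = t • (∑ i, c i • p i + s • z) +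
        s • (∑ i, d i • p i + t • (-z)) := by
      simp only [add_smul, Finset.sum_add_distrib, smul_add, Finset.smul_sum, mul_smul, smul_neg]
      rw [smul_comm t s z]; abel
    rw [this, hcz, hdz]; simp
  rcases le_total a b with hab | hab
  · refine ha' ⟨fun i => t * c i + s * d i, e1, e2, ?_, fun i hi => ?_⟩
    · exact add_pos_of_pos_of_nonneg (mul_pos ht' hca) (mul_nonneg hs (hd a))
    · simp [hc0 i hi, hd0 i (hi.trans_le hab)]
  · refine hb' ⟨fun i => t * c i + s * d i, e1, e2, ?_, fun i hi => ?_⟩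
    · exact add_pos_of_nonneg_of_pos (mul_nonneg ht (hc b)) (mul_pos hs' hdb)
    · simp [hd0 i hi, hc0 i (hi.trans_le hab)]

theorem odual_split (p : Fin n → V) (z : V) :
    (∀ a, ODualActive (Fin.snoc (α := fun _ => V) p z) a.castSucc →
      ODualActive (fun i => (span ℝ {z}).mkQ (p i)) a) ∨
    (∀ a, ODualActive (Fin.snoc (α := fun _ => V) p (-z)) a.castSucc →
      ODualActive (fun i => (span ℝ {z}).mkQ (p i)) a) := by
  by_contra! h
  obtain ⟨⟨a, ha, ha'⟩, b, hb, hb'⟩ := h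
  rw [odual_snoc] at ha hb
  rw [odual_quot] at ha' hb'
  obtain ⟨f, hc, hs, hca, hc0⟩ := ha
  obtain ⟨g, hd, ht, hdb, hd0⟩ := hb
  have hs' : 0 < f z := lt_of_le_of_ne hs fun h => ha' ⟨f, hc, h.symm, hca, hc0⟩
  have ht' : 0 < g (-z) := lt_of_le_of_ne ht fun h => hb' ⟨g, hd, by simpa using h, hdb, hd0⟩
  have e1 : ∀ i, 0 ≤ (g (-z) • f + f z • g) (p i) := fun i =>
    add_nonneg (mul_nonneg ht (hc i)) (mul_nonneg hs (hd i))
  have e2 : (g (-z) • f + f z • g) z = 0 := by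
    simp; ring
  rcases le_total a b with hab | hab
  · refine ha' ⟨g (-z) • f + f z • g, e1, e2, ?_, fun i hi => ?_⟩
    · exact add_pos_of_pos_of_nonneg (mul_pos ht' hca) (mul_nonneg hs (hd a))
    · simp [hc0 i hi, hd0 i (hi.trans_le hab)]
  · refine hb' ⟨g (-z) • f + f z • g, e1, e2, ?_, fun i hi => ?_⟩
    · exact add_pos_of_nonneg_of_pos (mul_nonneg ht (hc b)) (mul_pos hs' hdb)
    · simp [hd0 i hi, hc0 i (hi.trans_le hab)]

theorem oact_of_cocircuit (p : Fin n → V) (z : V)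
    (h : ∃ f : V →ₗ[ℝ] ℝ, (∀ i, 0 ≤ f (p i)) ∧ 0 < f z) (a : Fin n)
    (ha : OActive (Fin.snoc (α := fun _ => V) p z) a.castSucc) : OActive p a := by
  obtain ⟨f, hf, hz⟩ := h
  obtain ⟨c, t, h1, h2, h3, h4, h5⟩ := (oact_snoc p z a).1 ha
  have h6 := congrArg f h3
  simp only [map_add, map_sum, map_smul, smul_eq_mul, map_zero] at h6
  have h7 : 0 ≤ ∑ i, c i * f (p i) := Finset.sum_nonneg fun i _ => mul_nonneg (h1 i) (hf i)
  have h8 : 0 ≤ t * f z := mul_nonneg h2 hz.le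
  have h9 : t * f z = 0 := by linarith
  have h10 : t = 0 := by simpa [hz.ne'] using h9
  exact ⟨c, h1, by simpa [h10] using h3, h4, h5⟩

theorem odual_of_circuit (p : Fin n → V) (z : V)
    (h : ∃ c : Fin n → ℝ, (∀ i, 0 ≤ c i) ∧ ∑ i, c i • p i + z = 0) (a : Fin n)
    (ha : ODualActive (Fin.snoc (α := fun _ => V) p z) a.castSucc) :
    ODualActive (fun i => (span ℝ {z}).mkQ (p i)) a := by
  obtain ⟨c, hc, h3⟩ := h
  obtain ⟨f, h1, h2, h4, h5⟩ := (odual_snoc p z a).1 ha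
  rw [odual_quot]
  have h6 := congrArg f h3
  simp only [map_add, map_sum, map_smul, smul_eq_mul, map_zero] at h6
  have h7 : 0 ≤ ∑ i, c i * f (p i) := Finset.sum_nonneg fun i _ => mul_nonneg (hc i) (h1 i)
  exact ⟨f, h1, by linarith, h4, h5⟩

theorem oact_mono (p : Fin n → V) (z : V) (a : Fin n) (h : OActive p a) :
    OActive (Fin.snoc (α := fun _ => V) p z) a.castSucc := by
  obtain ⟨c, h1, h2, h3, h4⟩ := h
  exact (oact_snoc p z a).2 ⟨c, 0, h1, le_rfl, by simpa using h2, h3, h4⟩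

theorem odual_mono (p : Fin n → V) (z : V) (a : Fin n)
    (h : ODualActive (Fin.snoc (α := fun _ => V) p z) a.castSucc) : ODualActive p a := by
  obtain ⟨f, h1, h2, h3, h4⟩ := (odual_snoc p z a).1 h
  exact ⟨f, h1, h3, h4⟩

/-- The main matching statement. -/
theorem matching (p : Fin n → V) (z : V) :
    ((∀ a, OActive (Fin.snoc (α := fun _ => V) p z) a.castSucc ↔ OActive p a) ∧
     (∀ a, ODualActive (Fin.snoc (α := fun _ => V) p z) a.castSucc ↔ ODualActive p a) ∧
     (∀ a, OActive (Fin.snoc (α := fun _ => V) p (-z)) a.castSucc ↔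
        OActive (fun i => (span ℝ {z}).mkQ (p i)) a) ∧
     (∀ a, ODualActive (Fin.snoc (α := fun _ => V) p (-z)) a.castSucc ↔
        ODualActive (fun i => (span ℝ {z}).mkQ (p i)) a)) ∨
    ((∀ a, OActive (Fin.snoc (α := fun _ => V) p (-z)) a.castSucc ↔ OActive p a) ∧
     (∀ a, ODualActive (Fin.snoc (α := fun _ => V) p (-z)) a.castSucc ↔ ODualActive p a) ∧
     (∀ a, OActive (Fin.snoc (α := fun _ => V) p z) a.castSucc ↔
        OActive (fun i => (span ℝ {z}).mkQ (p i)) a) ∧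
     (∀ a, ODualActive (Fin.snoc (α := fun _ => V) p z) a.castSucc ↔
        ODualActive (fun i => (span ℝ {z}).mkQ (p i)) a)) := by
  have A1 := oact_mono p z
  have A2 := oact_mono p (-z)
  have B1 := odual_mono p z
  have B2 := odual_mono p (-z)
  have A3 : ∀ a, OActive (Fin.snoc (α := fun _ => V) p z) a.castSucc →
      OActive (fun i => (span ℝ {z}).mkQ (p i)) a := by
    intro a h
    obtain ⟨c, t, h1, h2, h3, h4⟩ := (oact_snoc p z a).1 h
    exact (oact_quot p z a).2 ⟨c, t, h1, h3, h4⟩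
  have A4 : ∀ a, OActive (Fin.snoc (α := fun _ => V) p (-z)) a.castSucc →
      OActive (fun i => (span ℝ {z}).mkQ (p i)) a := by
    intro a h
    obtain ⟨c, t, h1, h2, h3, h4⟩ := (oact_snoc p (-z) a).1 h
    exact (oact_quot p z a).2 ⟨c, -t, h1, by simpa using h3, h4⟩
  have A5 : ∀ a, OActive (fun i => (span ℝ {z}).mkQ (p i)) a →
      OActive (Fin.snoc (α := fun _ => V) p z) a.castSucc ∨
      OActive (Fin.snoc (α := fun _ => V) p (-z)) a.castSucc := by
    intro a h
    obtain ⟨c, t, h1, h3, h4⟩ := (oact_quot p z a).1 h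
    rcases le_total 0 t with ht | ht
    · left; exact (oact_snoc p z a).2 ⟨c, t, h1, ht, h3, h4⟩
    · right; exact (oact_snoc p (-z) a).2 ⟨c, -t, h1, by linarith, by simpa using h3, h4⟩
  have B3 : ∀ a, ODualActive (fun i => (span ℝ {z}).mkQ (p i)) a →
      ODualActive (Fin.snoc (α := fun _ => V) p z) a.castSucc := by
    intro a h
    obtain ⟨f, h1, h2, h3⟩ := (odual_quot p z a).1 h
    exact (odual_snoc p z a).2 ⟨f, h1, h2.ge, h3⟩
  have B4 : ∀ a, ODualActive (fun i => (span ℝ {z}).mkQ (p i)) a →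
      ODualActive (Fin.snoc (α := fun _ => V) p (-z)) a.castSucc := by
    intro a h
    obtain ⟨f, h1, h2, h3⟩ := (odual_quot p z a).1 h
    exact (odual_snoc p (-z) a).2 ⟨f, h1, by simp [h2], h3⟩
  have B5 : ∀ a, ODualActive p a →
      ODualActive (Fin.snoc (α := fun _ => V) p z) a.castSucc ∨
      ODualActive (Fin.snoc (α := fun _ => V) p (-z)) a.castSucc := by
    rintro a ⟨f, h1, h3⟩
    rcases le_total 0 (f z) with ht | ht
    · left; exact (odual_snoc p z a).2 ⟨f, h1, ht, h3⟩
    · right; exact (odual_snoc p (-z) a).2 ⟨f, h1, by simpa using ht, h3⟩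
  have A6 := oact_split p z
  have B6 := odual_split p z
  have C1 : (∀ a, ODualActive (Fin.snoc (α := fun _ => V) p z) a.castSucc →
      ODualActive (fun i => (span ℝ {z}).mkQ (p i)) a) ∨
      (∀ a, OActive (Fin.snoc (α := fun _ => V) p z) a.castSucc → OActive p a) :=
    (farkas6' p z).imp (odual_of_circuit p z) (oact_of_cocircuit p z)
  have C2 : (∀ a, ODualActive (Fin.snoc (α := fun _ => V) p (-z)) a.castSucc →
      ODualActive (fun i => (span ℝ {z}).mkQ (p i)) a) ∨
      (∀ a, OActive (Fin.snoc (α := fun _ => V) p (-z)) a.castSucc → OActive p a) := by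
    refine (farkas6' p (-z)).imp (fun h a ha => ?_) (oact_of_cocircuit p (-z))
    have := (odual_quot p (-z) a).1 (odual_of_circuit p (-z) h a ha)
    exact (odual_quot p z a).2 (by simpa using this)
  generalize hQ : OActive (fun i => (span ℝ {z}).mkQ (p i)) = Q at *
  generalize hE : ODualActive (fun i => (span ℝ {z}).mkQ (p i)) = E at *
  generalize hP : OActive p = P at *
  generalize hD : ODualActive p = D at *
  generalize OActive (Fin.snoc (α := fun _ => V) p z) = P1 at *
  generalize OActive (Fin.snoc (α := fun _ => V) p (-z)) = P2 at *
  generalize ODualActive (Fin.snoc (α := fun _ => V) p z) = D1 at *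
  generalize ODualActive (Fin.snoc (α := fun _ => V) p (-z)) = D2 at *
  clear hQ hE hP hD
  have fin1 : (∀ a : Fin n, P1 a.castSucc → P a) → (∀ a : Fin n, D2 a.castSucc → E a) →
     ((∀ a : Fin n, P1 a.castSucc ↔ P a) ∧ (∀ a : Fin n, D1 a.castSucc ↔ D a) ∧
      (∀ a : Fin n, P2 a.castSucc ↔ Q a) ∧ (∀ a : Fin n, D2 a.castSucc ↔ E a)) := by
    intro h1 h2
    refine ⟨fun a => ⟨h1 a, A1 a⟩, fun a => ⟨B1 a, fun h => ?_⟩, fun a => ⟨A4 a, fun h => ?_⟩,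
      fun a => ⟨h2 a, B4 a⟩⟩
    · exact (B5 a h).elim id fun h => B3 a (h2 a h)
    · exact (A5 a h).elim (fun h => A2 a (h1 a h)) id
  have fin2 : (∀ a : Fin n, P2 a.castSucc → P a) → (∀ a : Fin n, D1 a.castSucc → E a) →
     ((∀ a : Fin n, P2 a.castSucc ↔ P a) ∧ (∀ a : Fin n, D2 a.castSucc ↔ D a) ∧
      (∀ a : Fin n, P1 a.castSucc ↔ Q a) ∧ (∀ a : Fin n, D1 a.castSucc ↔ E a)) := by
    intro h1 h2
    refine ⟨fun a => ⟨h1 a, A2 a⟩, fun a => ⟨B2 a, fun h => ?_⟩, fun a => ⟨A3 a, fun h => ?_⟩,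
      fun a => ⟨h2 a, B3 a⟩⟩
    · exact (B5 a h).elim (fun h => B4 a (h2 a h)) id
    · exact (A5 a h).elim id (fun h => A1 a (h1 a h))
  rcases C1 with c1 | c1 <;> rcases C2 with c2 | c2
  · rcases A6 with h | h
    · exact Or.inl (fin1 h c2)
    · exact Or.inr (fin2 h c1)
  · exact Or.inr (fin2 c2 c1)
  · exact Or.inl (fin1 c1 c2)
  · rcases B6 with h | h
    · exact Or.inr (fin2 c2 h)
    · exact Or.inl (fin1 c1 h)
end aux

set_option linter.unusedSectionVars false
section aux2
universe uu
variable {n : ℕ} {V : Type uu} [AddCommGroup V] [Module ℝ V]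

theorem sum_finset_succ (F : Finset (Fin (n + 1)) → ℝ) :
    ∑ A, F A = ∑ A : Finset (Fin n), (F (A.map Fin.castSuccEmb) +
      F (insert (Fin.last n) (A.map Fin.castSuccEmb))) := by
  have h0 : (Finset.univ : Finset (Finset (Fin (n + 1)))) =
      (insert (Fin.last n) (Finset.univ.map Fin.castSuccEmb)).powerset := by
    ext A
    simp only [Finset.mem_univ, Finset.mem_powerset, true_iff]
    intro i _
    refine Fin.lastCases ?_ (fun j => ?_) i <;> simp
  have h1 : (Finset.univ.map (Fin.castSuccEmb (n := n))).powerset =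
      Finset.univ.map (Finset.mapEmbedding Fin.castSuccEmb).toEmbedding := by
    ext A
    simp only [Finset.mem_powerset, Finset.subset_map_iff, Finset.mem_map, Finset.mem_univ,
      true_and, Finset.subset_univ]
    constructor
    · rintro ⟨t, rfl⟩; exact ⟨t, rfl⟩
    · rintro ⟨t, rfl⟩; exact ⟨t, rfl⟩
  rw [h0, Finset.sum_powerset_insert (by simp), h1, Finset.sum_map, Finset.sum_map,
    Finset.sum_add_distrib]
  rfl

noncomputable def wt6 (x u y w : ℝ) (A : Finset (Fin n)) (D O : Fin n → Prop) : ℝ :=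
  x ^ {a | a ∉ A ∧ D a}.ncard * u ^ {a | a ∈ A ∧ D a}.ncard *
    y ^ {a | a ∉ A ∧ O a}.ncard * w ^ {a | a ∈ A ∧ O a}.ncard

theorem ncard_not_last (S : Set (Fin (n + 1))) (h : Fin.last n ∉ S) :
    S.ncard = {a : Fin n | a.castSucc ∈ S}.ncard := by
  have : S = Fin.castSucc '' {a : Fin n | a.castSucc ∈ S} := by
    ext i
    refine Fin.lastCases ?_ (fun j => ?_) i
    · simp [h]
    · simp
  conv_lhs => rw [this]
  exact Set.ncard_image_of_injective _ (Fin.castSucc_injective n)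

theorem ncard_last (S : Set (Fin (n + 1))) (h : Fin.last n ∈ S) :
    S.ncard = {a : Fin n | a.castSucc ∈ S}.ncard + 1 := by
  have : S = insert (Fin.last n) (S \ {Fin.last n}) := by simp [Set.insert_eq_of_mem h]
  rw [← Set.ncard_sdiff_singleton_add_one h, ncard_not_last _ (by simp)]
  congr 2
  ext a
  simp [Fin.castSucc_ne_last]

open Classical in
theorem wt6_map (x u y w : ℝ) (A : Finset (Fin n)) (D O : Fin (n + 1) → Prop) :
    wt6 x u y w (A.map Fin.castSuccEmb) D O =
      (if D (Fin.last n) then x else 1) * (if O (Fin.last n) then y else 1) *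
      wt6 x u y w A (fun a => D a.castSucc) (fun a => O a.castSucc) := by
  unfold wt6
  rw [ncard_not_last {a | a ∈ A.map Fin.castSuccEmb ∧ D a} (by simp),
    ncard_not_last {a | a ∈ A.map Fin.castSuccEmb ∧ O a} (by simp)]
  by_cases h1 : D (Fin.last n) <;> by_cases h2 : O (Fin.last n)
  · rw [ncard_last {a | a ∉ A.map Fin.castSuccEmb ∧ D a} (by simp [h1]),
      ncard_last {a | a ∉ A.map Fin.castSuccEmb ∧ O a} (by simp [h2])]
    simp [h1, h2, pow_succ]; ring
  · rw [ncard_last {a | a ∉ A.map Fin.castSuccEmb ∧ D a} (by simp [h1]),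
      ncard_not_last {a | a ∉ A.map Fin.castSuccEmb ∧ O a} (by simp [h2])]
    simp [h1, h2, pow_succ]; ring
  · rw [ncard_not_last {a | a ∉ A.map Fin.castSuccEmb ∧ D a} (by simp [h1]),
      ncard_last {a | a ∉ A.map Fin.castSuccEmb ∧ O a} (by simp [h2])]
    simp [h1, h2, pow_succ]; ring
  · rw [ncard_not_last {a | a ∉ A.map Fin.castSuccEmb ∧ D a} (by simp [h1]),
      ncard_not_last {a | a ∉ A.map Fin.castSuccEmb ∧ O a} (by simp [h2])]
    simp [h1, h2]

open Classical in
theorem wt6_insert (x u y w : ℝ) (A : Finset (Fin n)) (D O : Fin (n + 1) → Prop) :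
    wt6 x u y w (insert (Fin.last n) (A.map Fin.castSuccEmb)) D O =
      (if D (Fin.last n) then u else 1) * (if O (Fin.last n) then w else 1) *
      wt6 x u y w A (fun a => D a.castSucc) (fun a => O a.castSucc) := by
  unfold wt6
  have e : ∀ a : Fin n, a.castSucc ≠ Fin.last n := fun a => Fin.castSucc_ne_last a
  set B := insert (Fin.last n) (A.map Fin.castSuccEmb) with hB
  have m1 : Fin.last n ∈ B := by simp [hB]
  have m2 : ∀ a : Fin n, a.castSucc ∈ B ↔ a ∈ A := by
    intro a; simp [hB, e]
  clear_value B
  rw [ncard_not_last {a | a ∉ B ∧ D a} (by simp [m1]),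
    ncard_not_last {a | a ∉ B ∧ O a} (by simp [m1])]
  by_cases h1 : D (Fin.last n) <;> by_cases h2 : O (Fin.last n)
  · rw [ncard_last {a | a ∈ B ∧ D a} (by simp [h1, m1]),
      ncard_last {a | a ∈ B ∧ O a} (by simp [h2, m1])]
    simp [h1, h2, m2, pow_succ]; ring
  · rw [ncard_last {a | a ∈ B ∧ D a} (by simp [h1, m1]),
      ncard_not_last {a | a ∈ B ∧ O a} (by simp [h2])]
    simp [h1, h2, m2, pow_succ]; ring
  · rw [ncard_not_last {a | a ∈ B ∧ D a} (by simp [h1]),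
      ncard_last {a | a ∈ B ∧ O a} (by simp [h2, m1])]
    simp [h1, h2, m2, pow_succ]; ring
  · rw [ncard_not_last {a | a ∈ B ∧ D a} (by simp [h1]),
      ncard_not_last {a | a ∈ B ∧ O a} (by simp [h2])]
    simp [h1, h2, m2]

theorem reorient_map (v : Fin (n + 1) → V) (A : Finset (Fin n)) :
    reorient v (A.map Fin.castSuccEmb) =
      Fin.snoc (α := fun _ => V) (reorient (fun i => v i.castSucc) A) (v (Fin.last n)) := by
  funext i
  refine Fin.lastCases ?_ (fun j => ?_) i <;> simp [reorient]

theorem reorient_insert (v : Fin (n + 1) → V) (A : Finset (Fin n)) :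
    reorient v (insert (Fin.last n) (A.map Fin.castSuccEmb)) =
      Fin.snoc (α := fun _ => V) (reorient (fun i => v i.castSucc) A) (-v (Fin.last n)) := by
  funext i
  have e : ∀ a : Fin n, a.castSucc ≠ Fin.last n := fun a => Fin.castSucc_ne_last a
  refine Fin.lastCases ?_ (fun j => ?_) i <;> simp [reorient, e]

theorem span_reorient (v : Fin n → V) (A : Finset (Fin n)) :
    span ℝ (Set.range (reorient v A)) = span ℝ (Set.range v) := by
  apply le_antisymm <;> rw [span_le] <;> rintro _ ⟨i, rfl⟩
  · unfold reorient
    split_ifs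
    · exact neg_mem (subset_span ⟨i, rfl⟩)
    · exact subset_span ⟨i, rfl⟩
  · have h : reorient v A i ∈ span ℝ (Set.range (reorient v A)) := subset_span ⟨i, rfl⟩
    unfold reorient at h ⊢
    split_ifs at h
    · simpa using neg_mem h
    · exact h

/-! ranks -/
variable [FiniteDimensional ℝ V]

theorem vrank_map (v : Fin (n + 1) → V) (A : Finset (Fin n)) :
    vrank v ↑(A.map Fin.castSuccEmb) = vrank (fun i => v i.castSucc) ↑A := by
  unfold vrank
  have : v '' ↑(A.map Fin.castSuccEmb) = (fun i : Fin n => v i.castSucc) '' (↑A : Set (Fin n)) := by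
    rw [Finset.coe_map, Set.image_image]; rfl
  rw [this]

theorem vrank_insert_aux (v : Fin (n + 1) → V) (A : Finset (Fin n)) :
    vrank v ↑(insert (Fin.last n) (A.map Fin.castSuccEmb)) =
      Module.finrank ℝ ↥(span ℝ {v (Fin.last n)} ⊔ span ℝ ((fun i : Fin n => v i.castSucc) '' (↑A : Set (Fin n)))) := by
  unfold vrank
  have : v '' ↑(insert (Fin.last n) (A.map Fin.castSuccEmb)) =
      insert (v (Fin.last n)) ((fun i : Fin n => v i.castSucc) '' (↑A : Set (Fin n))) := by
    rw [Finset.coe_insert, Set.image_insert_eq, Finset.coe_map, Set.image_image]; rfl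
  rw [this, span_insert]

theorem univ_eq6 : (Set.univ : Set (Fin (n + 1))) =
    ↑(insert (Fin.last n) ((Finset.univ : Finset (Fin n)).map Fin.castSuccEmb)) := by
  ext i
  refine Fin.lastCases ?_ (fun j => ?_) i <;> simp

theorem finrank_quot_aux (z : V) (U : Submodule ℝ V) :
    Module.finrank ℝ ↥(span ℝ {z} ⊔ U) =
      Module.finrank ℝ ↥(U.map (span ℝ {z}).mkQ) + Module.finrank ℝ ↥(span ℝ {z}) := by
  have h := LinearMap.finrank_range_add_finrank_ker
    ((span ℝ {z}).mkQ.domRestrict (span ℝ {z} ⊔ U))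
  rw [← h, LinearMap.range_domRestrict, Submodule.map_sup, LinearMap.ker_domRestrict, ker_mkQ]
  congr 1
  · have : map (span ℝ {z}).mkQ (span ℝ {z}) = ⊥ := by
      rw [eq_bot_iff, Submodule.map_le_iff_le_comap]; simp [Submodule.comap_bot, ker_mkQ]
    rw [this, bot_sup_eq]
  · exact (Submodule.comapSubtypeEquivOfLe le_sup_left).finrank_eq

theorem vrank_quot (z : V) (p : Fin n → V) (S : Set (Fin n)) :
    vrank (fun i => (span ℝ {z}).mkQ (p i)) S =
      Module.finrank ℝ ↥((span ℝ (p '' S)).map (span ℝ {z}).mkQ) := by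
  unfold vrank
  rw [Submodule.map_span, Set.image_image]

theorem vrank_insert (v : Fin (n + 1) → V) (hz : v (Fin.last n) ≠ 0) (A : Finset (Fin n)) :
    vrank v ↑(insert (Fin.last n) (A.map Fin.castSuccEmb)) =
      vrank (fun i => (span ℝ {v (Fin.last n)}).mkQ (v i.castSucc)) ↑A + 1 := by
  rw [vrank_insert_aux, finrank_quot_aux, finrank_span_singleton hz,
    vrank_quot _ (fun i => v i.castSucc)]

theorem vrank_insert_coloop (v : Fin (n + 1) → V)
    (hz : v (Fin.last n) ∉ span ℝ (Set.range fun i : Fin n => v i.castSucc)) (A : Finset (Fin n)) :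
    vrank v ↑(insert (Fin.last n) (A.map Fin.castSuccEmb)) =
      vrank (fun i => v i.castSucc) ↑A + 1 := by
  rw [vrank_insert_aux, sup_comm]
  exact Submodule.finrank_sup_span_singleton
    fun h => hz (span_mono (Set.image_subset_range _ _) h)

theorem vrank_insert_loop (v : Fin (n + 1) → V) (hz : v (Fin.last n) = 0) (A : Finset (Fin n)) :
    vrank v ↑(insert (Fin.last n) (A.map Fin.castSuccEmb)) = vrank (fun i => v i.castSucc) ↑A := by
  rw [vrank_insert_aux, hz, span_zero_singleton, bot_sup_eq]
  rfl

theorem vrank_univ_nc (v : Fin (n + 1) → V)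
    (hz : v (Fin.last n) ∈ span ℝ (Set.range fun i : Fin n => v i.castSucc)) :
    vrank v Set.univ = vrank (fun i => v i.castSucc) Set.univ := by
  rw [univ_eq6, vrank_insert_aux, sup_eq_right.2]
  · rw [Finset.coe_univ]; rfl
  · rw [span_le]; rintro _ rfl; simpa using hz

theorem vrank_le (v : Fin n → V) (A : Finset (Fin n)) : vrank v ↑A ≤ A.card := by
  classical
  unfold vrank
  rw [← Finset.coe_image]
  exact (finrank_span_finset_le_card _).trans Finset.card_image_le

theorem vrank_le_univ (v : Fin n → V) (A : Finset (Fin n)) : vrank v ↑A ≤ vrank v Set.univ :=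
  Submodule.finrank_mono (span_mono (Set.image_mono (Set.subset_univ _)))

theorem card_insert6 (A : Finset (Fin n)) :
    (insert (Fin.last n) (A.map Fin.castSuccEmb)).card = A.card + 1 := by
  rw [Finset.card_insert_of_notMem (by simp), Finset.card_map]

theorem tutte_loop (v : Fin (n + 1) → V) (hz : v (Fin.last n) = 0) (x y : ℝ) :
    tutteV v x y = y * tutteV (fun i => v i.castSucc) x y := by
  unfold tutteV
  rw [sum_finset_succ, Finset.mul_sum, vrank_univ_nc v (by rw [hz]; exact zero_mem _)]
  refine Finset.sum_congr rfl fun A _ => ?_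
  rw [vrank_map, vrank_insert_loop v hz, card_insert6, Finset.card_map]
  have := vrank_le (fun i => v i.castSucc) A
  rw [Nat.sub_add_comm this, pow_succ]; ring

theorem tutte_coloop (v : Fin (n + 1) → V)
    (hz : v (Fin.last n) ∉ span ℝ (Set.range fun i : Fin n => v i.castSucc)) (x y : ℝ) :
    tutteV v x y = x * tutteV (fun i => v i.castSucc) x y := by
  unfold tutteV
  rw [sum_finset_succ, Finset.mul_sum, univ_eq6, vrank_insert_coloop v hz]
  refine Finset.sum_congr rfl fun A _ => ?_
  rw [vrank_map, vrank_insert_coloop v hz, card_insert6, Finset.card_map, Finset.coe_univ]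
  have := vrank_le_univ (fun i => v i.castSucc) A
  rw [Nat.sub_add_comm this, pow_succ, Nat.add_sub_add_right, Nat.add_sub_add_right]; ring

theorem tutte_delcon (v : Fin (n + 1) → V) (h0 : v (Fin.last n) ≠ 0)
    (hz : v (Fin.last n) ∈ span ℝ (Set.range fun i : Fin n => v i.castSucc)) (x y : ℝ) :
    tutteV v x y = tutteV (fun i => v i.castSucc) x y +
      tutteV (fun i => (span ℝ {v (Fin.last n)}).mkQ (v i.castSucc)) x y := by
  have hu := vrank_univ_nc v hz
  have hu2 : vrank v Set.univ = vrank (fun i : Fin n =>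
      (span ℝ {v (Fin.last n)}).mkQ (v i.castSucc)) Set.univ + 1 := by rw [univ_eq6, vrank_insert v h0, Finset.coe_univ]
  unfold tutteV
  rw [sum_finset_succ, ← Finset.sum_add_distrib, ← hu]
  refine Finset.sum_congr rfl fun A _ => ?_
  rw [vrank_map, vrank_insert v h0, card_insert6, Finset.card_map, hu2,
    Nat.add_sub_add_right, Nat.add_sub_add_right]

theorem wt6_congr {x u y w : ℝ} {A : Finset (Fin n)} {D O D' O' : Fin n → Prop}
    (h1 : ∀ a, D a ↔ D' a) (h2 : ∀ a, O a ↔ O' a) : wt6 x u y w A D O = wt6 x u y w A D' O' := by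
  rw [funext fun a => propext (h1 a), funext fun a => propext (h2 a)]

theorem odual_coloop (p : Fin n → V) (z : V) (hz : z ∉ span ℝ (Set.range p)) (a : Fin n)
    (h : ODualActive p a) : ODualActive (Fin.snoc (α := fun _ => V) p z) a.castSucc := by
  obtain ⟨g, hg, hk⟩ := Submodule.exists_le_ker_of_notMem hz
  have hp : ∀ i, g (p i) = 0 := fun i => hk (subset_span ⟨i, rfl⟩)
  obtain ⟨f, h1, h2, h3⟩ := h
  refine (odual_snoc p z a).2 ⟨f - (f z / g z) • g, ?_, ?_, ?_, ?_⟩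
  · simpa [hp] using h1
  · simp [hg]
  · simpa [hp] using h2
  · simpa [hp] using h3

theorem oact_coloop (p : Fin n → V) (z : V) (hz : z ∉ span ℝ (Set.range p)) (a : Fin n)
    (h : OActive (Fin.snoc (α := fun _ => V) p z) a.castSucc) : OActive p a := by
  obtain ⟨g, hg, hk⟩ := Submodule.exists_le_ker_of_notMem hz
  have hp : ∀ i, g (p i) = 0 := fun i => hk (subset_span ⟨i, rfl⟩)
  refine oact_of_cocircuit p z ⟨g z • g, by simp [hp], ?_⟩ a h
  simpa using mul_self_pos.2 hg

end aux2

theorem main6.{uu} (x u y w : ℝ) (n : ℕ) : ∀ (V : Type uu) [AddCommGroup V] [Module ℝ V]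
    [FiniteDimensional ℝ V] (v : Fin n → V),
    tutteV v (x + u) (y + w) = ∑ A : Finset (Fin n),
      wt6 x u y w A (ODualActive (reorient v A)) (OActive (reorient v A)) := by
  induction n with
  | zero =>
    intro V _ _ _ v
    have h1 : ∀ S : Set (Fin 0), v '' S = ∅ := fun S => by
      rw [Set.eq_empty_of_isEmpty S, Set.image_empty]
    have h2 : (default : Finset (Fin 0)) = ∅ := Subsingleton.elim _ _
    have h3 : ∀ S : Set (Fin 0), vrank v S = 0 := fun S => by
      unfold vrank
      rw [h1, span_empty, finrank_bot]
    simp [tutteV, wt6, h3, h2, Set.eq_empty_of_isEmpty]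
  | succ n ih =>
    intro V _ _ _ v
    have hneg : ∀ p : Fin n → V, -v (Fin.last n) ∈ span ℝ (Set.range p) ↔
        v (Fin.last n) ∈ span ℝ (Set.range p) := fun p => neg_mem_iff
    rw [sum_finset_succ]
    simp only [wt6_map, wt6_insert, reorient_map, reorient_insert]
    have L1 : ∀ A, OActive (Fin.snoc (α := fun _ => V) (reorient (fun i : Fin n => v i.castSucc) A)
        (v (Fin.last n))) (Fin.last n) ↔ v (Fin.last n) = 0 := fun A => oact_last _ _
    have L2 : ∀ A, OActive (Fin.snoc (α := fun _ => V) (reorient (fun i : Fin n => v i.castSucc) A)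
        (-v (Fin.last n))) (Fin.last n) ↔ v (Fin.last n) = 0 :=
      fun A => (oact_last _ _).trans neg_eq_zero
    have L3 : ∀ A, ODualActive (Fin.snoc (α := fun _ => V)
        (reorient (fun i : Fin n => v i.castSucc) A) (v (Fin.last n))) (Fin.last n) ↔
        v (Fin.last n) ∉ span ℝ (Set.range fun i : Fin n => v i.castSucc) := fun A => by
      rw [odual_last, span_reorient]
    have L4 : ∀ A, ODualActive (Fin.snoc (α := fun _ => V)
        (reorient (fun i : Fin n => v i.castSucc) A) (-v (Fin.last n))) (Fin.last n) ↔
        v (Fin.last n) ∉ span ℝ (Set.range fun i : Fin n => v i.castSucc) := fun A => by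
      rw [odual_last, span_reorient, neg_mem_iff]
    by_cases h0 : v (Fin.last n) = 0
    · have hmem : v (Fin.last n) ∈ span ℝ (Set.range fun i : Fin n => v i.castSucc) := by
        rw [h0]; exact zero_mem _
      rw [tutte_loop v h0, ih, Finset.mul_sum]
      refine Finset.sum_congr rfl fun A _ => ?_
      rw [if_neg (fun h => (L3 A).1 h hmem), if_neg (fun h => (L4 A).1 h hmem),
        if_pos ((L1 A).2 h0), if_pos ((L2 A).2 h0), one_mul, one_mul, add_mul]
      simp only [h0, neg_zero]
      congr 2
      all_goals
        refine wt6_congr (fun a => ⟨fun h => ?_, odual_mono _ _ a⟩)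
          (fun a => ⟨oact_mono _ _ a, fun h => ?_⟩)
        · obtain ⟨f, h1, h2⟩ := h
          exact (odual_snoc _ _ a).2 ⟨f, h1, by simp, h2⟩
        · obtain ⟨c, t, h1, h2, h3, h4⟩ := (oact_snoc _ _ a).1 h
          exact ⟨c, h1, by simpa using h3, h4⟩
    · by_cases hz : v (Fin.last n) ∈ span ℝ (Set.range fun i : Fin n => v i.castSucc)
      · rw [tutte_delcon v h0 hz, ih, ih, ← Finset.sum_add_distrib]
        refine Finset.sum_congr rfl fun A _ => ?_
        rw [if_neg (fun h => (L3 A).1 h hz), if_neg (fun h => (L4 A).1 h hz),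
          if_neg (fun h => h0 ((L1 A).1 h)), if_neg (fun h => h0 ((L2 A).1 h))]
        simp only [one_mul]
        have hq : reorient (fun i => (span ℝ {v (Fin.last n)}).mkQ (v (Fin.castSucc i))) A =
            fun i => (span ℝ {v (Fin.last n)}).mkQ (reorient (fun i => v i.castSucc) A i) := by
          funext i
          unfold reorient
          split_ifs
          · rw [map_neg]
          · rfl
        rw [hq]
        rcases matching (reorient (fun i => v i.castSucc) A) (v (Fin.last n)) with
          ⟨h1, h2, h3, h4⟩ | ⟨h1, h2, h3, h4⟩
        · rw [wt6_congr h2 h1, wt6_congr h4 h3]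
        · rw [wt6_congr h2 h1, wt6_congr h4 h3, add_comm]
      · rw [tutte_coloop v hz, ih, Finset.mul_sum]
        refine Finset.sum_congr rfl fun A _ => ?_
        have hz1 : v (Fin.last n) ∉
            span ℝ (Set.range (reorient (fun i : Fin n => v i.castSucc) A)) := by
          rwa [span_reorient]
        have hz2 := hz1
        rw [← hneg] at hz2
        rw [if_pos ((L3 A).2 hz), if_pos ((L4 A).2 hz),
          if_neg (fun h => h0 ((L1 A).1 h)), if_neg (fun h => h0 ((L2 A).1 h)), mul_one, mul_one]
        rw [add_mul]
        congr 2
        · exact wt6_congr (fun a => ⟨odual_coloop _ _ hz1 a, odual_mono _ _ a⟩)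
            (fun a => ⟨oact_mono _ _ a, oact_coloop _ _ hz1 a⟩)
        · exact wt6_congr (fun a => ⟨odual_coloop _ _ hz2 a, odual_mono _ _ a⟩)
            (fun a => ⟨oact_mono _ _ a, oact_coloop _ _ hz2 a⟩)

/-- 4-variable expansion of the Tutte polynomial in orientation activities:
`t(x+u, y+w) = ∑_{A ⊆ Fin n} x^θ*(A) · u^θ̄*(A) · y^θ(A) · w^θ̄(A)`. -/
theorem statement6 {n : ℕ} {V : Type*} [AddCommGroup V] [Module ℝ V] [FiniteDimensional ℝ V]
    (v : Fin n → V) (x u y w : ℝ) :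
    tutteV v (x + u) (y + w) =
      ∑ A : Finset (Fin n),
        x ^ thetaStar v A * u ^ thetaStarBar v A * y ^ theta v A * w ^ thetaBar v A := by
  exact main6 x u y w n V v
end

section
/- (Two alternate expansions of t(2,0) in terms of θ-activities, realizable case.) For every vector configuration v : Fin n → V: t(2,0) = ∑_{A ⊆ Fin n with θ̄*(A) = θ(A) = θ̄(A) = 0} 2^{θ*(A)} = ∑_{A ⊆ Fin n with θ*(A) = θ(A) = θ̄(A) = 0} 2^{θ̄*(A)}. -/
open Set Submodule

namespace Aux8

/-- Acyclicity, in functional form. -/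
def Acyc {n : ℕ} {V : Type*} [AddCommGroup V] [Module ℝ V] (w : Fin n → V) : Prop :=
  ∃ f : V →ₗ[ℝ] ℝ, ∀ i, 0 < f (w i)

/-- Dual activity of `a` in `x` extended by one last vector `u`. -/
def Act {n : ℕ} {V : Type*} [AddCommGroup V] [Module ℝ V] (x : Fin n → V) (u : V)
    (a : Fin n) : Prop :=
  ∃ f : V →ₗ[ℝ] ℝ, (∀ i, 0 ≤ f (x i)) ∧ 0 ≤ f u ∧ 0 < f (x a) ∧ ∀ i < a, f (x i) = 0

/-- Gordan's theorem. -/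
theorem gordan {n : ℕ} {V : Type*} [AddCommGroup V] [Module ℝ V] (w : Fin n → V) :
    (∀ a, ¬ OActive w a) ↔ Acyc w := by
  constructor
  · intro h
    let T : (Fin n → ℝ) →ₗ[ℝ] V := Fintype.linearCombination ℝ w
    have hT : ∀ c, T c = ∑ i, c i • w i := fun c => Fintype.linearCombination_apply ℝ w c
    have hdisj : Disjoint (stdSimplex ℝ (Fin n)) (LinearMap.ker T : Set (Fin n → ℝ)) := by
      rw [Set.disjoint_left]
      rintro c ⟨hc0, hc1⟩ hc
      have hc' : ∑ i, c i • w i = 0 := by rw [← hT]; exact hc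
      have hex : ∃ i, 0 < c i := by
        by_contra! hcon
        have : ∑ i, c i ≤ 0 := Finset.sum_nonpos (fun i _ => hcon i)
        linarith
      classical
      let S := Finset.univ.filter (fun i => 0 < c i)
      have hS : S.Nonempty := by
        obtain ⟨i, hi⟩ := hex
        exact ⟨i, by simp [S, hi]⟩
      refine h (S.min' hS) ⟨c, hc0, hc', ?_, ?_⟩
      · have := S.min'_mem hS
        simpa [S] using this
      · intro i hi
        by_contra hne
        have hpos : 0 < c i := lt_of_le_of_ne (hc0 i) (Ne.symm hne)
        have : S.min' hS ≤ i := S.min'_le i (by simp [S, hpos])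
        exact absurd hi (not_lt.mpr this)
    obtain ⟨φ, s, t, h1, h2, h3⟩ := geometric_hahn_banach_compact_closed
      (convex_stdSimplex ℝ (Fin n)) (isCompact_stdSimplex ℝ (Fin n)) (LinearMap.ker T).convex
      (LinearMap.ker T).closed_of_finiteDimensional hdisj
    have ht : t < 0 := by simpa using h3 0 (LinearMap.ker T).zero_mem
    have hker : ∀ k ∈ LinearMap.ker T, φ k = 0 := by
      intro k hk
      by_contra hne
      have := h3 ((t / φ k) • k) ((LinearMap.ker T).smul_mem _ hk)
      simp [hne] at this
    have hmem : (φ : (Fin n → ℝ) →ₗ[ℝ] ℝ) ∈ LinearMap.range T.dualMap := by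
      rw [LinearMap.range_dualMap_eq_dualAnnihilator_ker, Submodule.mem_dualAnnihilator]
      intro k hk
      exact hker k hk
    obtain ⟨g, hg⟩ := hmem
    refine ⟨-g, fun i => ?_⟩
    have h4 : φ (Pi.single i 1) < s := h1 _ (single_mem_stdSimplex ℝ i)
    have h5 : g (T (Pi.single i 1)) = φ (Pi.single i 1) := by
      have := LinearMap.congr_fun hg (Pi.single i 1)
      simpa using this
    have h6 : T (Pi.single i 1) = w i := by
      simp [T]
    rw [h6] at h5
    simp only [LinearMap.neg_apply]
    linarith
  · rintro ⟨f, hf⟩ a ⟨c, hc0, hc, hca, -⟩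
    have h1 : ∑ i, c i * f (w i) = 0 := by
      have := congrArg f hc
      simpa using this
    have h2 : 0 < ∑ i, c i * f (w i) :=
      Finset.sum_pos' (fun i _ => mul_nonneg (hc0 i) (hf i).le)
        ⟨a, Finset.mem_univ _, mul_pos hca (hf a)⟩
    linarith

section functionals
variable {n : ℕ} {V : Type*} [AddCommGroup V] [Module ℝ V] {x : Fin n → V} {u : V}

theorem acyc_snoc : Acyc (Fin.snoc x u : Fin (n + 1) → V) ↔
    ∃ f : V →ₗ[ℝ] ℝ, (∀ i, 0 < f (x i)) ∧ 0 < f u := by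
  unfold Acyc
  simp [Fin.forall_fin_succ']

theorem act_snoc {a : Fin n} :
    ODualActive (Fin.snoc x u : Fin (n + 1) → V) a.castSucc ↔ Act x u a := by
  unfold ODualActive Act
  simp [Fin.forall_fin_succ', and_assoc]
  refine exists_congr fun f => ?_
  have : ¬ (Fin.last n < a.castSucc) := by simp [Fin.le_last]
  simp [this]

theorem act_last : ODualActive (Fin.snoc x u : Fin (n + 1) → V) (Fin.last n) ↔
    ∃ f : V →ₗ[ℝ] ℝ, (∀ i, f (x i) = 0) ∧ 0 < f u := by
  unfold ODualActive
  simp only [Fin.forall_fin_succ', Fin.snoc_castSucc, Fin.snoc_last]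
  refine exists_congr fun f => ⟨fun ⟨h1, h2, h3⟩ => ⟨fun i => h3.1 i (Fin.castSucc_lt_last i), h2⟩,
    fun ⟨h1, h2⟩ => ⟨⟨fun i => (h1 i).ge, h2.le⟩, h2, fun i _ => h1 i, fun h => absurd h (lt_irrefl _)⟩⟩

theorem acyc_quot : Acyc (fun i => (span ℝ {u}).mkQ (x i)) ↔
    ∃ f : V →ₗ[ℝ] ℝ, (∀ i, 0 < f (x i)) ∧ f u = 0 := by
  constructor
  · rintro ⟨f, hf⟩
    refine ⟨f ∘ₗ (span ℝ {u}).mkQ, hf, ?_⟩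
    have : (span ℝ {u}).mkQ u = 0 := by simp [Submodule.mem_span_singleton_self]
    rw [LinearMap.comp_apply, this, map_zero]
  · rintro ⟨f, hf, hu⟩
    exact ⟨(span ℝ {u}).liftQ f (by rw [Submodule.span_singleton_le_iff_mem]; exact hu),
      fun i => by simpa using hf i⟩

theorem active_quot {a : Fin n} : ODualActive (fun i => (span ℝ {u}).mkQ (x i)) a ↔
    ∃ f : V →ₗ[ℝ] ℝ, (∀ i, 0 ≤ f (x i)) ∧ f u = 0 ∧ 0 < f (x a) ∧ ∀ i < a, f (x i) = 0 := by
  constructor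
  · rintro ⟨f, hf, hf'⟩
    refine ⟨f ∘ₗ (span ℝ {u}).mkQ, hf, ?_, hf'⟩
    have : (span ℝ {u}).mkQ u = 0 := by simp [Submodule.mem_span_singleton_self]
    rw [LinearMap.comp_apply, this, map_zero]
  · rintro ⟨f, hf, hu, hf', hf''⟩
    exact ⟨(span ℝ {u}).liftQ f (by rw [Submodule.span_singleton_le_iff_mem]; exact hu),
      fun i => by simpa using hf i, by simpa using hf', fun i hi => by simpa using hf'' i hi⟩

theorem exists_eps (p q : Fin n → ℝ) (hp : ∀ i, 0 < p i) :
    ∃ ε : ℝ, 0 < ε ∧ ∀ i, 0 < p i + ε * q i := by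
  have h : ∀ᶠ ε in nhdsWithin (0 : ℝ) (Set.Ioi 0), ∀ i, 0 < p i + ε * q i := by
    rw [Filter.eventually_all]
    intro i
    apply Filter.Eventually.filter_mono nhdsWithin_le_nhds
    have hc : ContinuousAt (fun ε : ℝ => p i + ε * q i) 0 := by fun_prop
    exact hc.eventually (lt_mem_nhds (by simpa using hp i))
  obtain ⟨ε, h1, h2⟩ := (h.and self_mem_nhdsWithin).exists
  exact ⟨ε, h2, h1⟩

theorem perturb (hu : u ≠ 0) (h : ∃ f : V →ₗ[ℝ] ℝ, (∀ i, 0 < f (x i)) ∧ f u = 0) :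
    ∃ f : V →ₗ[ℝ] ℝ, (∀ i, 0 < f (x i)) ∧ 0 < f u := by
  obtain ⟨f, hf, hfu⟩ := h
  have : ∃ g : V →ₗ[ℝ] ℝ, 0 < g u := by
    by_contra! hcon
    apply hu
    rw [← Module.forall_dual_apply_eq_zero_iff ℝ]
    intro g
    have h1 := hcon g
    have h2 := hcon (-g)
    simp only [LinearMap.neg_apply] at h2
    linarith
  obtain ⟨g, hg⟩ := this
  obtain ⟨ε, he, h⟩ := exists_eps (fun i => f (x i)) (fun i => g (x i)) hf
  refine ⟨f + ε • g, fun i => by simpa using h i, ?_⟩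
  simp [hfu, mul_pos he hg]

theorem acyc_del (hu : u ≠ 0) : Acyc x ↔
    Acyc (Fin.snoc x u : Fin (n + 1) → V) ∨ Acyc (Fin.snoc x (-u) : Fin (n + 1) → V) := by
  rw [acyc_snoc, acyc_snoc]
  constructor
  · rintro ⟨f, hf⟩
    rcases lt_trichotomy (f u) 0 with h | h | h
    · exact Or.inr ⟨f, hf, by simpa using h⟩
    · exact Or.inl (perturb hu ⟨f, hf, h⟩)
    · exact Or.inl ⟨f, hf, h⟩
  · rintro (⟨f, hf, -⟩ | ⟨f, hf, -⟩) <;> exact ⟨f, hf⟩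

theorem acyc_con (hu : u ≠ 0) : Acyc (fun i => (span ℝ {u}).mkQ (x i)) ↔
    Acyc (Fin.snoc x u : Fin (n + 1) → V) ∧ Acyc (Fin.snoc x (-u) : Fin (n + 1) → V) := by
  rw [acyc_snoc, acyc_snoc, acyc_quot]
  constructor
  · rintro ⟨f, hf, h⟩
    exact ⟨perturb hu ⟨f, hf, h⟩, perturb (neg_ne_zero.mpr hu) ⟨f, hf, by simp [h]⟩⟩
  · rintro ⟨⟨f, hf, h⟩, ⟨g, hg, h'⟩⟩
    rw [map_neg] at h'
    refine ⟨(-g u) • f + (f u) • g, fun i => ?_, ?_⟩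
    · simp only [LinearMap.add_apply, LinearMap.smul_apply, smul_eq_mul]
      have h1 := mul_pos h' (hf i)
      have h2 := mul_pos h (hg i)
      linarith
    · simp only [LinearMap.add_apply, LinearMap.smul_apply, smul_eq_mul]
      ring

theorem active_del {a : Fin n} : ODualActive x a ↔ Act x u a ∨ Act x (-u) a := by
  constructor
  · rintro ⟨f, h1, h2⟩
    rcases le_total 0 (f u) with h | h
    · exact Or.inl ⟨f, h1, h, h2⟩
    · exact Or.inr ⟨f, h1, by simpa using h, h2⟩
  · rintro (⟨f, h1, h, h2⟩ | ⟨f, h1, h, h2⟩) <;> exact ⟨f, h1, h2⟩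

theorem combine {a b : Fin n} (hab : a ≤ b) (h1 : Act x u a) (h2 : Act x (-u) b) :
    ODualActive (fun i => (span ℝ {u}).mkQ (x i)) a ∨
      ODualActive (fun i => (span ℝ {u}).mkQ (x i)) b := by
  rw [active_quot, active_quot]
  obtain ⟨f, f1, f2, f3, f4⟩ := h1
  obtain ⟨g, g1, g2, g3, g4⟩ := h2
  rw [map_neg] at g2
  rcases f2.eq_or_lt with h | h
  · exact Or.inl ⟨f, f1, h.symm, f3, f4⟩
  rcases g2.eq_or_lt with h' | h'
  · exact Or.inr ⟨g, g1, by linarith, g3, g4⟩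
  refine Or.inl ⟨(-g u) • f + (f u) • g, fun i => ?_, ?_, ?_, fun i hi => ?_⟩ <;>
    simp only [LinearMap.add_apply, LinearMap.smul_apply, smul_eq_mul]
  · have h1 := mul_nonneg g2 (f1 i)
    have h2 := mul_nonneg f2 (g1 i)
    linarith
  · ring
  · have h1 := mul_pos h' f3
    have h2 := mul_nonneg f2 (g1 a)
    linarith
  · rw [f4 i hi, g4 i (hi.trans_le hab)]
    ring

theorem active_con {a : Fin n} : ODualActive (fun i => (span ℝ {u}).mkQ (x i)) a ↔
    Act x u a ∧ Act x (-u) a := by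
  constructor
  · rw [active_quot]
    rintro ⟨f, h1, h, h2⟩
    exact ⟨⟨f, h1, h.ge, h2⟩, ⟨f, h1, by simp [h], h2⟩⟩
  · rintro ⟨h1, h2⟩
    rcases combine le_rfl h1 h2 with h | h <;> exact h

theorem chain : (∀ a, Act x u a → Act x (-u) a) ∨ (∀ a, Act x (-u) a → Act x u a) := by
  by_contra! h
  obtain ⟨⟨a, ha, ha'⟩, ⟨b, hb, hb'⟩⟩ := h
  rcases le_total a b with hab | hab
  · rcases combine hab ha hb with h | h
    · exact ha' (active_con.1 h).2
    · exact hb' (active_con.1 h).1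
  · rcases combine (u := -u) hab hb (by simpa using ha) with h | h
    · have := (active_con.1 h).2
      rw [neg_neg] at this
      exact hb' this
    · exact ha' (active_con.1 h).1

theorem one_sided {a : Fin n} (hP : Acyc (Fin.snoc x u : Fin (n + 1) → V))
    (hQ : ¬ Acyc (Fin.snoc x (-u) : Fin (n + 1) → V)) (h : Act x (-u) a) : Act x u a := by
  rw [acyc_snoc] at hP hQ
  obtain ⟨f, hf, hfu⟩ := hP
  obtain ⟨g, g1, g2, g3, g4⟩ := h
  rw [map_neg] at g2
  rcases g2.eq_or_lt with h' | h'
  · exact ⟨g, g1, by linarith, g3, g4⟩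
  exfalso
  apply hQ
  refine ⟨f + ((f u + 1) / (-g u)) • g, fun i => ?_, ?_⟩ <;>
    simp only [LinearMap.add_apply, LinearMap.smul_apply, smul_eq_mul, map_neg]
  · have : 0 ≤ (f u + 1) / (-g u) * g (x i) :=
      mul_nonneg (div_nonneg (by linarith) g2) (g1 i)
    linarith [hf i]
  · have hne : g u ≠ 0 := by linarith
    have : (f u + 1) / (-g u) * g u = -(f u + 1) := by field_simp
    linarith

end functionals

section weights
open Classical

/-- The weight of a reoriented configuration `w` relative to the reorienting set `A`. -/
noncomputable def wt {n : ℕ} {V : Type*} [AddCommGroup V] [Module ℝ V] (w : Fin n → V)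
    (A : Finset (Fin n)) : ℝ :=
  if Acyc w ∧ ∀ a ∈ A, ¬ ODualActive w a then
    2 ^ (Finset.univ.filter (fun a => ODualActive w a)).card else 0

variable {n : ℕ} {V : Type*} [AddCommGroup V] [Module ℝ V]

theorem card_snoc (p : Fin (n + 1) → Prop) :
    (Finset.univ.filter p).card =
      (Finset.univ.filter (fun a : Fin n => p a.castSucc)).card
        + if p (Fin.last n) then 1 else 0 := by
  rw [Finset.card_filter, Finset.card_filter, Fin.sum_univ_castSucc]

theorem wt_snoc_noncoloop (x : Fin n → V) (u : V) (B : Finset (Fin n))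
    (A : Finset (Fin (n + 1))) (hA : ∀ b : Fin n, b.castSucc ∈ A ↔ b ∈ B)
    (hl : ¬ ODualActive (Fin.snoc x u : Fin (n + 1) → V) (Fin.last n)) :
    wt (Fin.snoc x u : Fin (n + 1) → V) A =
      if Acyc (Fin.snoc x u : Fin (n + 1) → V) ∧ ∀ a ∈ B, ¬ Act x u a then
        2 ^ (Finset.univ.filter (fun a => Act x u a)).card else 0 := by
  unfold wt
  rw [card_snoc]
  simp only [Fin.forall_fin_succ', hA, act_snoc, hl, not_false_eq_true, implies_true, and_true,
    if_false, add_zero]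

theorem wt_rec (x : Fin n → V) (u : V) (hu : u ≠ 0) (B : Finset (Fin n))
    (A₁ A₂ : Finset (Fin (n + 1))) (h₁ : ∀ b : Fin n, b.castSucc ∈ A₁ ↔ b ∈ B)
    (h₂ : ∀ b : Fin n, b.castSucc ∈ A₂ ↔ b ∈ B) (hl₁ : Fin.last n ∉ A₁) (hl₂ : Fin.last n ∈ A₂) :
    wt (Fin.snoc x u : Fin (n + 1) → V) A₁ + wt (Fin.snoc x (-u) : Fin (n + 1) → V) A₂ =
      wt x B + wt (fun i => (span ℝ {u}).mkQ (x i)) B := by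
  by_cases hc : ∃ f : V →ₗ[ℝ] ℝ, (∀ i, f (x i) = 0) ∧ 0 < f u
  · have hl : ODualActive (Fin.snoc x u : Fin (n + 1) → V) (Fin.last n) := act_last.2 hc
    have hl' : ODualActive (Fin.snoc x (-u) : Fin (n + 1) → V) (Fin.last n) := by
      obtain ⟨f, h1, h2⟩ := hc
      exact act_last.2 ⟨-f, by simp [h1], by simpa using h2⟩
    have e2 : wt (Fin.snoc x (-u) : Fin (n + 1) → V) A₂ = 0 := by
      unfold wt
      rw [if_neg]
      rintro ⟨-, h⟩
      exact h _ hl₂ hl'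
    obtain ⟨g, hg, hgu⟩ := hc
    -- adjust the value at `u` freely
    have adj : ∀ (f : V →ₗ[ℝ] ℝ) (t : ℝ), ∃ f' : V →ₗ[ℝ] ℝ, (∀ i, f' (x i) = f (x i)) ∧ f' u = t := by
      intro f t
      refine ⟨f + ((t - f u) / g u) • g, fun i => by simp [hg], ?_⟩
      simp only [LinearMap.add_apply, LinearMap.smul_apply, smul_eq_mul]
      field_simp
      ring
    have ac1 : Acyc (Fin.snoc x u : Fin (n + 1) → V) ↔ Acyc x := by
      rw [acyc_snoc]
      refine ⟨fun ⟨f, hf, _⟩ => ⟨f, hf⟩, fun ⟨f, hf⟩ => ?_⟩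
      obtain ⟨f', h1, h2⟩ := adj f 1
      exact ⟨f', fun i => by rw [h1]; exact hf i, by rw [h2]; exact one_pos⟩
    have ac2 : Acyc (fun i => (span ℝ {u}).mkQ (x i)) ↔ Acyc x := by
      rw [acyc_quot]
      refine ⟨fun ⟨f, hf, _⟩ => ⟨f, hf⟩, fun ⟨f, hf⟩ => ?_⟩
      obtain ⟨f', h1, h2⟩ := adj f 0
      exact ⟨f', fun i => by rw [h1]; exact hf i, h2⟩
    have da2 : ∀ a, ODualActive (fun i => (span ℝ {u}).mkQ (x i)) a ↔ ODualActive x a := by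
      intro a
      rw [active_quot]
      refine ⟨fun ⟨f, hf, _, h⟩ => ⟨f, hf, h⟩, fun ⟨f, hf, h⟩ => ?_⟩
      obtain ⟨f', h1, h2⟩ := adj f 0
      refine ⟨f', fun i => by rw [h1]; exact hf i, h2, by rw [h1]; exact h.1, fun i hi => ?_⟩
      rw [h1]; exact h.2 i hi
    have da1 : ∀ a, Act x u a ↔ ODualActive x a := fun a =>
      ⟨fun h => active_del.2 (Or.inl h), fun h => (active_con.1 ((da2 a).2 h)).1⟩
    have e1 : wt (Fin.snoc x u : Fin (n + 1) → V) A₁ = 2 * wt x B := by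
      unfold wt
      rw [card_snoc, if_pos hl, ac1]
      simp only [Fin.forall_fin_succ', h₁, act_snoc, da1, hl₁, false_imp_iff, and_true]
      split_ifs
      · rw [pow_succ]; ring
      · simp
    have e3 : wt (fun i => (span ℝ {u}).mkQ (x i)) B = wt x B := by
      unfold wt
      simp only [ac2, da2]
    rw [e1, e2, e3]; ring
  · rw [wt_snoc_noncoloop x u B A₁ h₁ (by rwa [act_last]),
      wt_snoc_noncoloop x (-u) B A₂ h₂ (by
        rw [act_last]
        rintro ⟨f, h1, h2⟩
        exact hc ⟨-f, by simp [h1], by simpa using h2⟩)]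
    unfold wt
    simp only [acyc_del (x := x) hu, acyc_con (x := x) hu, active_con (x := x) (u := u), active_del (x := x) (u := u)]
    have key1 := fun hP hQ a => one_sided (x := x) (u := u) (a := a) hP hQ
    have key2 := fun hP hQ a => one_sided (x := x) (u := -u) (a := a) hP hQ
    rw [neg_neg] at key2
    have key3 := chain (x := x) (u := u)
    generalize Acyc (Fin.snoc x u : Fin (n + 1) → V) = P at *
    generalize Acyc (Fin.snoc x (-u) : Fin (n + 1) → V) = Q at *
    generalize Act x u = D₁ at *
    generalize Act x (-u) = D₂ at *
    have sub12 : (∀ a, D₁ a → D₂ a) → (∀ a, (D₁ a ∨ D₂ a ↔ D₂ a)) ∧ (∀ a, (D₁ a ∧ D₂ a ↔ D₁ a)) :=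
      fun h => ⟨fun a => ⟨fun h' => h'.elim (h a) id, Or.inr⟩, fun a => ⟨fun h' => h'.1, fun h' => ⟨h', h a h'⟩⟩⟩
    have sub21 : (∀ a, D₂ a → D₁ a) → (∀ a, (D₁ a ∨ D₂ a ↔ D₁ a)) ∧ (∀ a, (D₁ a ∧ D₂ a ↔ D₂ a)) :=
      fun h => ⟨fun a => ⟨fun h' => h'.elim id (h a), Or.inl⟩, fun a => ⟨fun h' => h'.2, fun h' => ⟨h a h', h'⟩⟩⟩
    by_cases hP : P <;> by_cases hQ : Q
    · rcases key3 with h | h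
      · simp only [(sub12 h).1, (sub12 h).2, hP, hQ, true_and, or_true]
        ring
      · simp only [(sub21 h).1, (sub21 h).2, hP, hQ, true_and, or_true]
    · simp only [(sub21 (key1 hP hQ)).1, hP, hQ, or_false, and_false, false_and, true_and, if_false]
    · simp only [(sub12 (key2 hQ hP)).1, hP, hQ, false_or, false_and, true_and, if_false]
      ring
    · simp only [hP, hQ, false_or, false_and, if_false]

end weights

theorem sum_split {n : ℕ} (F : Finset (Fin (n + 1)) → ℝ) :
    ∑ A, F A = ∑ B : Finset (Fin n), (F (B.map Fin.castSuccEmb) +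
      F (insert (Fin.last n) (B.map Fin.castSuccEmb))) := by
  have h1 : (Finset.univ : Finset (Finset (Fin (n + 1)))) =
      (insert (Fin.last n) (Finset.univ.map Fin.castSuccEmb)).powerset := by
    rw [← Finset.powerset_univ, Fin.univ_castSuccEmb, Finset.cons_eq_insert]
  have h2 : (Finset.univ.map Fin.castSuccEmb : Finset (Fin (n + 1))).powerset =
      (Finset.univ : Finset (Finset (Fin n))).map
        ⟨fun B => B.map Fin.castSuccEmb, Finset.map_injective _⟩ := by
    ext A
    simp only [Finset.mem_powerset, Finset.mem_map, Finset.mem_univ, true_and,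
      Function.Embedding.coeFn_mk]
    rw [Finset.subset_map_iff]
    constructor
    · rintro ⟨t, -, rfl⟩; exact ⟨t, rfl⟩
    · rintro ⟨t, rfl⟩; exact ⟨t, Finset.subset_univ _, rfl⟩
  rw [h1, Finset.sum_powerset_insert (by simp), h2, Finset.sum_map, Finset.sum_map,
    ← Finset.sum_add_distrib]
  rfl

section rank
variable {n : ℕ} {V : Type*} [AddCommGroup V] [Module ℝ V] [FiniteDimensional ℝ V]

theorem finrank_map_mkQ (p S : Submodule ℝ V) (h : p ≤ S) :
    Module.finrank ℝ (S.map p.mkQ) + Module.finrank ℝ p = Module.finrank ℝ S := by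
  have := LinearMap.finrank_range_add_finrank_ker (p.mkQ.domRestrict S)
  rw [LinearMap.range_domRestrict, LinearMap.ker_domRestrict, Submodule.ker_mkQ] at this
  rw [← this]
  congr 1
  exact (Submodule.submoduleOfEquivOfLe h).finrank_eq.symm

theorem vrank_del (v : Fin (n + 1) → V) (B : Finset (Fin n)) :
    vrank v ↑(B.map Fin.castSuccEmb) = vrank (fun i : Fin n => v i.castSucc) ↑B := by
  unfold vrank
  rw [Finset.coe_map, Set.image_image]
  rfl

theorem vrank_loop (v : Fin (n + 1) → V) (h : v (Fin.last n) = 0) (B : Finset (Fin n)) :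
    vrank v ↑(insert (Fin.last n) (B.map Fin.castSuccEmb)) =
      vrank (fun i : Fin n => v i.castSucc) ↑B := by
  rw [← vrank_del]
  unfold vrank
  rw [Finset.coe_insert, Set.image_insert_eq, h, Submodule.span_insert_zero]

theorem vrank_con (v : Fin (n + 1) → V) (h : v (Fin.last n) ≠ 0) (B : Finset (Fin n)) :
    vrank v ↑(insert (Fin.last n) (B.map Fin.castSuccEmb)) =
      vrank (fun i : Fin n => (span ℝ {v (Fin.last n)}).mkQ (v i.castSucc)) ↑B + 1 := by
  unfold vrank
  rw [← finrank_map_mkQ (span ℝ {v (Fin.last n)}), finrank_span_singleton h]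
  · suffices hs : (span ℝ (v '' ↑(insert (Fin.last n) (B.map Fin.castSuccEmb)))).map
        (span ℝ {v (Fin.last n)}).mkQ =
        span ℝ ((fun i : Fin n => (span ℝ {v (Fin.last n)}).mkQ (v i.castSucc)) '' ↑B) by
      rw [hs]
    rw [Finset.coe_insert, Set.image_insert_eq, Submodule.map_span, Set.image_insert_eq]
    have : (span ℝ {v (Fin.last n)}).mkQ (v (Fin.last n)) = 0 := by
      simp [Submodule.mem_span_singleton_self]
    rw [this, Submodule.span_insert_zero, Finset.coe_map, Set.image_image, Set.image_image]
    rfl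
  · apply Submodule.span_mono
    rw [Set.singleton_subset_iff]
    exact ⟨Fin.last n, by simp, rfl⟩

theorem vrank_le (v : Fin n → V) (A : Finset (Fin n)) : vrank v ↑A ≤ A.card := by
  classical
  unfold vrank
  rw [← Finset.coe_image]
  exact (finrank_span_finset_le_card _).trans Finset.card_image_le

theorem tutte_eq (v : Fin n → V) : tutteV v 2 0 = ∑ A : Finset (Fin n), (-1 : ℝ) ^ (A.card + vrank v ↑A) := by
  unfold tutteV
  refine Finset.sum_congr rfl fun A _ => ?_
  have h := vrank_le v A
  have e1 : (2 : ℝ) - 1 = 1 := by norm_num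
  have e2 : (0 : ℝ) - 1 = -1 := by norm_num
  rw [e1, e2, one_pow, one_mul]
  obtain ⟨k, hk⟩ := Nat.exists_eq_add_of_le h
  rw [hk]
  have : vrank v ↑A + k + vrank v ↑A = k + 2 * vrank v ↑A := by ring
  rw [this, pow_add, pow_mul]
  simp

end rank

theorem reorient_split₁ {n : ℕ} {V : Type*} [AddCommGroup V] (v : Fin (n + 1) → V)
    (B : Finset (Fin n)) : reorient v (B.map Fin.castSuccEmb) =
      Fin.snoc (reorient (fun i : Fin n => v i.castSucc) B) (v (Fin.last n)) := by
  funext i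
  refine Fin.lastCases ?_ (fun i => ?_) i
  · simp [reorient]
  · simp [reorient]

theorem reorient_split₂ {n : ℕ} {V : Type*} [AddCommGroup V] (v : Fin (n + 1) → V)
    (B : Finset (Fin n)) : reorient v (insert (Fin.last n) (B.map Fin.castSuccEmb)) =
      Fin.snoc (reorient (fun i : Fin n => v i.castSucc) B) (-v (Fin.last n)) := by
  funext i
  refine Fin.lastCases ?_ (fun i => ?_) i
  · simp [reorient]
  · simp [reorient]

theorem main_rec (n : ℕ) : ∀ {V : Type*} [AddCommGroup V] [Module ℝ V] [FiniteDimensional ℝ V]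
    (v : Fin n → V), ∑ A : Finset (Fin n), (-1 : ℝ) ^ (A.card + vrank v ↑A) =
      ∑ A : Finset (Fin n), wt (reorient v A) A := by
  induction n with
  | zero =>
    intro V _ _ _ v
    rw [show (Finset.univ : Finset (Finset (Fin 0))) = {∅} from rfl, Finset.sum_singleton,
      Finset.sum_singleton]
    have h1 : Acyc (reorient v ∅) := ⟨0, fun i => i.elim0⟩
    have h2 : vrank v ↑(∅ : Finset (Fin 0)) = 0 := by
      have := vrank_le v ∅
      simpa using this
    rw [h2]
    simp [wt, h1]
  | succ n ih =>
    intro V _ _ _ v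
    rw [sum_split, sum_split]
    by_cases h : v (Fin.last n) = 0
    · refine Finset.sum_congr rfl fun B _ => ?_
      rw [vrank_loop v h, vrank_del, reorient_split₁, reorient_split₂, h,
        Finset.card_insert_of_notMem (by simp), Finset.card_map]
      have h1 : ¬ Acyc (Fin.snoc (reorient (fun i : Fin n => v i.castSucc) B) (0 : V) :
          Fin (n + 1) → V) := by
        rw [acyc_snoc]
        rintro ⟨f, -, hf⟩
        simp at hf
      simp only [wt, neg_zero, h1, false_and, if_false]
      ring
    · have hR : ∀ B : Finset (Fin n),
          wt (reorient v (B.map Fin.castSuccEmb)) (B.map Fin.castSuccEmb) +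
          wt (reorient v (insert (Fin.last n) (B.map Fin.castSuccEmb)))
            (insert (Fin.last n) (B.map Fin.castSuccEmb)) =
          wt (reorient (fun i : Fin n => v i.castSucc) B) B +
          wt (reorient (fun i : Fin n => (span ℝ {v (Fin.last n)}).mkQ (v i.castSucc)) B) B := by
        intro B
        rw [reorient_split₁, reorient_split₂, wt_rec _ _ h B _ _ (by simp) (by simp)
          (by simp) (by simp)]
        congr 2
        funext i
        unfold reorient
        split_ifs <;> simp
      rw [Finset.sum_congr rfl (fun B _ => hR B)]
      rw [Finset.sum_add_distrib (f := fun B => wt (reorient (fun i : Fin n => v i.castSucc) B) B), ← ih, ← ih, ← Finset.sum_add_distrib]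
      refine Finset.sum_congr rfl fun B _ => ?_
      rw [vrank_con v h, vrank_del,
        Finset.card_insert_of_notMem (by simp), Finset.card_map]
      ring

theorem theta_iff {n : ℕ} {V : Type*} [AddCommGroup V] [Module ℝ V] (v : Fin n → V)
    (A : Finset (Fin n)) : (theta v A = 0 ∧ thetaBar v A = 0) ↔ Acyc (reorient v A) := by
  rw [← gordan]
  unfold theta thetaBar
  rw [Set.ncard_eq_zero, Set.ncard_eq_zero, Set.eq_empty_iff_forall_notMem,
    Set.eq_empty_iff_forall_notMem]
  constructor
  · rintro ⟨h1, h2⟩ a ha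
    by_cases h : a ∈ A
    · exact h2 a ⟨h, ha⟩
    · exact h1 a ⟨h, ha⟩
  · intro h
    exact ⟨fun a ha => h a ha.2, fun a ha => h a ha.2⟩

theorem first {n : ℕ} {V : Type*} [AddCommGroup V] [Module ℝ V] [FiniteDimensional ℝ V]
    (v : Fin n → V) :
    tutteV v 2 0 =
      ∑ A ∈ Finset.univ.filter
        (fun A : Finset (Fin n) => thetaStarBar v A = 0 ∧ theta v A = 0 ∧ thetaBar v A = 0),
        (2 : ℝ) ^ thetaStar v A := by
  classical
  rw [tutte_eq, main_rec, Finset.sum_filter]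
  refine Finset.sum_congr rfl fun A _ => ?_
  have h1 : thetaStarBar v A = 0 ↔ ∀ a ∈ A, ¬ ODualActive (reorient v A) a := by
    unfold thetaStarBar
    rw [Set.ncard_eq_zero, Set.eq_empty_iff_forall_notMem]
    simp
  have h2 : (thetaStarBar v A = 0 ∧ theta v A = 0 ∧ thetaBar v A = 0) ↔
      (Acyc (reorient v A) ∧ ∀ a ∈ A, ¬ ODualActive (reorient v A) a) := by
    rw [theta_iff, h1, and_comm]
  unfold wt
  by_cases h : Acyc (reorient v A) ∧ ∀ a ∈ A, ¬ ODualActive (reorient v A) a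
  · rw [if_pos h, if_pos (h2.2 h)]
    congr 1
    unfold thetaStar
    rw [← Set.ncard_coe_finset]
    congr 1
    ext a
    simp only [Finset.coe_filter, Finset.mem_univ, true_and, Set.mem_setOf_eq]
    exact ⟨fun ha => ⟨fun haA => h.2 a haA ha, ha⟩, fun ha => ha.2⟩
  · rw [if_neg h, if_neg (fun h' => h (h2.1 h'))]

theorem reorient_compl {n : ℕ} {V : Type*} [AddCommGroup V] (v : Fin n → V)
    (A : Finset (Fin n)) (i : Fin n) : reorient v Aᶜ i = - reorient v A i := by
  unfold reorient
  by_cases h : i ∈ A <;> simp [h]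

theorem active_compl {n : ℕ} {V : Type*} [AddCommGroup V] [Module ℝ V] (v : Fin n → V)
    (A : Finset (Fin n)) (a : Fin n) :
    ODualActive (reorient v Aᶜ) a ↔ ODualActive (reorient v A) a := by
  constructor
  · rintro ⟨f, h⟩
    exact ⟨-f, by simpa [reorient_compl] using h⟩
  · rintro ⟨f, h⟩
    exact ⟨-f, by simpa [reorient_compl] using h⟩

theorem acyc_compl {n : ℕ} {V : Type*} [AddCommGroup V] [Module ℝ V] (v : Fin n → V)
    (A : Finset (Fin n)) : Acyc (reorient v Aᶜ) ↔ Acyc (reorient v A) := by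
  constructor
  · rintro ⟨f, h⟩
    exact ⟨-f, by simpa [reorient_compl] using h⟩
  · rintro ⟨f, h⟩
    exact ⟨-f, by simpa [reorient_compl] using h⟩

end Aux8

/-- two alternate expansions of `t(2,0)` in terms of `θ`-activities. -/
theorem statement8 {n : ℕ} {V : Type*} [AddCommGroup V] [Module ℝ V] [FiniteDimensional ℝ V]
    (v : Fin n → V) :
    tutteV v 2 0 =
      ∑ A ∈ Finset.univ.filter
        (fun A : Finset (Fin n) => thetaStarBar v A = 0 ∧ theta v A = 0 ∧ thetaBar v A = 0),
        (2 : ℝ) ^ thetaStar v A ∧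
    tutteV v 2 0 =
      ∑ A ∈ Finset.univ.filter
        (fun A : Finset (Fin n) => thetaStar v A = 0 ∧ theta v A = 0 ∧ thetaBar v A = 0),
        (2 : ℝ) ^ thetaStarBar v A := by
  refine ⟨Aux8.first v, ?_⟩
  rw [Aux8.first v, Finset.sum_filter, Finset.sum_filter]
  refine Fintype.sum_equiv (compl_involutive.toPerm _) _ _ fun A => ?_
  have h1 : thetaStar v Aᶜ = thetaStarBar v A := by
    unfold thetaStar thetaStarBar
    simp only [Aux8.active_compl, Finset.mem_compl, not_not]
  have h2 : thetaStarBar v Aᶜ = thetaStar v A := by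
    unfold thetaStar thetaStarBar
    simp only [Aux8.active_compl, Finset.mem_compl]
  have h3 : (theta v Aᶜ = 0 ∧ thetaBar v Aᶜ = 0) ↔ (theta v A = 0 ∧ thetaBar v A = 0) := by
    rw [Aux8.theta_iff, Aux8.theta_iff, Aux8.acyc_compl]
  rw [Function.Involutive.coe_toPerm]
  by_cases h : thetaStarBar v A = 0 ∧ theta v A = 0 ∧ thetaBar v A = 0
  · rw [if_pos h, if_pos ⟨h1.trans h.1, h3.2 h.2⟩, h2]
  · rw [if_neg h, if_neg (fun h' => h ⟨h1.symm.trans h'.1, h3.1 h'.2⟩)]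
end

section
/- (Counting acyclic reorientations, realizable case.) For every vector configuration v : Fin n → V, the evaluation t(2,0) of the Tutte polynomial equals the number of subsets A ⊆ Fin n such that the reorientation v_A is acyclic, i.e. such that there is no nonzero c : Fin n → ℝ with c i ≥ 0 for all i and ∑ i, c i • v_A i = 0 (equivalently, o(A) = 0). -/
open Set Submodule

/-- `w` restricted to `s` admits no nonzero nonnegative dependence. -/
def Acyc {ι : Type*} {V : Type*} [AddCommGroup V] [Module ℝ V]
    (s : Finset ι) (w : ι → V) : Prop :=
  ∀ c : ι → ℝ, (∀ i, 0 ≤ c i) → ∑ i ∈ s, c i • w i = 0 → ∀ i ∈ s, c i = 0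

/-- The same with one additional vector `u`. -/
def AcycU {ι : Type*} {V : Type*} [AddCommGroup V] [Module ℝ V]
    (s : Finset ι) (u : V) (w : ι → V) : Prop :=
  ∀ (d : ℝ) (c : ι → ℝ), 0 ≤ d → (∀ i, 0 ≤ c i) → d • u + ∑ i ∈ s, c i • w i = 0 →
    d = 0 ∧ ∀ i ∈ s, c i = 0

lemma acyc_congr {ι : Type*} {V : Type*} [AddCommGroup V] [Module ℝ V]
    {s : Finset ι} {w w' : ι → V} (h : ∀ i ∈ s, w i = w' i) : Acyc s w ↔ Acyc s w' := by
  unfold Acyc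
  have : ∀ c : ι → ℝ, ∑ i ∈ s, c i • w i = ∑ i ∈ s, c i • w' i := fun c =>
    Finset.sum_congr rfl (fun i hi => by rw [h i hi])
  simp only [this]

lemma acyc_insert {ι : Type*} [DecidableEq ι] {V : Type*} [AddCommGroup V] [Module ℝ V]
    {s : Finset ι} {a : ι} (ha : a ∉ s) (w : ι → V) :
    Acyc (insert a s) w ↔ AcycU s (w a) w := by
  constructor
  · intro h d c hd hc hs
    have hne : ∀ i ∈ s, i ≠ a := fun i hi e => ha (e ▸ hi)
    have := h (fun i => if i = a then d else c i) (by intro i; split_ifs <;> simp [hd, hc])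
      (by
        rw [Finset.sum_insert ha, ← hs]
        simp only [if_true]
        congr 1
        exact Finset.sum_congr rfl (fun i hi => by rw [if_neg (hne i hi)]))
    refine ⟨by simpa using this a (by simp), fun i hi => ?_⟩
    simpa [hne i hi] using this i (by simp [hi])
  · intro h c hc hs i hi
    rw [Finset.sum_insert ha] at hs
    have := h (c a) c (hc a) hc hs
    rcases Finset.mem_insert.1 hi with rfl | hi
    · exact this.1
    · exact this.2 i hi

lemma acycU_acyc {ι : Type*} {V : Type*} [AddCommGroup V] [Module ℝ V]
    {s : Finset ι} {u : V} {w : ι → V} (h : AcycU s u w) : Acyc s w := by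
  intro c hc hs
  exact (h 0 c le_rfl hc (by simpa using hs)).2

lemma mkQ_sum {ι : Type*} {V : Type*} [AddCommGroup V] [Module ℝ V]
    (s : Finset ι) (u : V) (w : ι → V) (c : ι → ℝ) :
    ∑ i ∈ s, c i • (span ℝ {u}).mkQ (w i) = 0 ↔ ∃ l : ℝ, l • u = ∑ i ∈ s, c i • w i := by
  have : ∑ i ∈ s, c i • (span ℝ {u}).mkQ (w i) = (span ℝ {u}).mkQ (∑ i ∈ s, c i • w i) := by
    simp [map_sum]
  rw [this, ← LinearMap.mem_ker, Submodule.ker_mkQ, Submodule.mem_span_singleton]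

lemma acyc_quot {ι : Type*} {V : Type*} [AddCommGroup V] [Module ℝ V]
    {s : Finset ι} {u : V} (hu : u ≠ 0) {w : ι → V} :
    Acyc s (fun i => (span ℝ {u}).mkQ (w i)) ↔ AcycU s u w ∧ AcycU s (-u) w := by
  constructor
  · intro h
    have key : ∀ (d : ℝ) (c : ι → ℝ), (∀ i, 0 ≤ c i) → d • u + ∑ i ∈ s, c i • w i = 0 →
        d = 0 ∧ ∀ i ∈ s, c i = 0 := by
      intro d c hc hs
      have h0 := h c hc ((mkQ_sum s u w c).2 ⟨-d, by
        rw [neg_smul]; exact (eq_neg_of_add_eq_zero_right hs).symm⟩)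
      refine ⟨?_, h0⟩
      rw [Finset.sum_eq_zero (fun i hi => by rw [h0 i hi, zero_smul]), add_zero] at hs
      exact (smul_eq_zero.1 hs).resolve_right hu
    refine ⟨fun d c _ hc hs => key d c hc hs, fun d c _ hc hs => ?_⟩
    have := key (-d) c hc (by simpa using hs)
    exact ⟨by simpa using this.1, this.2⟩
  · rintro ⟨h1, h2⟩ c hc hs
    obtain ⟨l, hl⟩ := (mkQ_sum s u w c).1 hs
    rcases le_total l 0 with h | h
    · exact (h1 (-l) c (by linarith) hc (by rw [← hl]; simp)).2
    · exact (h2 l c h hc (by rw [← hl]; simp)).2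

lemma acyc_or {ι : Type*} {V : Type*} [AddCommGroup V] [Module ℝ V]
    {s : Finset ι} {u : V} (hu : u ≠ 0) {w : ι → V} :
    Acyc s w ↔ AcycU s u w ∨ AcycU s (-u) w := by
  refine ⟨fun h => ?_, fun h => h.elim acycU_acyc acycU_acyc⟩
  by_contra hcon
  rw [not_or] at hcon
  obtain ⟨h1, h2⟩ := hcon
  have main : ∀ u : V, u ≠ 0 → ¬ AcycU s u w → ∃ (d : ℝ) (c : ι → ℝ), 0 < d ∧ (∀ i, 0 ≤ c i) ∧
      (∃ i ∈ s, c i ≠ 0) ∧ d • u + ∑ i ∈ s, c i • w i = 0 := by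
    intro u hu hn
    unfold AcycU at hn
    push Not at hn
    obtain ⟨d, c, hd, hc, hs, hi⟩ := hn
    have hd0 : d ≠ 0 := by
      rintro rfl
      obtain ⟨i, his, hi⟩ := hi rfl
      exact hi (h c hc (by simpa using hs) i his)
    refine ⟨d, c, lt_of_le_of_ne hd (Ne.symm hd0), hc, ?_, hs⟩
    by_contra hz
    push Not at hz
    rw [Finset.sum_eq_zero (fun i hi => by rw [hz i hi, zero_smul]), add_zero] at hs
    exact (smul_ne_zero hd0 hu) hs
  obtain ⟨d, c, hd, hc, ⟨i, his, hi⟩, hs⟩ := main u hu h1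
  obtain ⟨d', c', hd', hc', -, hs'⟩ := main (-u) (neg_ne_zero.2 hu) h2
  have := h (fun i => d' * c i + d * c' i)
    (fun i => add_nonneg (mul_nonneg hd'.le (hc i)) (mul_nonneg hd.le (hc' i)))
    (by
      simp only [add_smul, mul_smul, Finset.sum_add_distrib, ← Finset.smul_sum]
      rw [eq_neg_of_add_eq_zero_right hs, eq_neg_of_add_eq_zero_right hs']
      rw [smul_neg, smul_neg, smul_neg, smul_neg, neg_neg, smul_comm]; simp) i his
  have h3 : 0 < c i := lt_of_le_of_ne (hc i) (Ne.symm hi)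
  have h4 := mul_pos hd' h3
  have h5 := mul_nonneg hd.le (hc' i)

  linarith

open Classical in
lemma acyc_count {ι : Type*} {V : Type*} [AddCommGroup V] [Module ℝ V]
    {s : Finset ι} {u : V} (hu : u ≠ 0) {w : ι → V} :
    (if AcycU s u w then (1:ℝ) else 0) + (if AcycU s (-u) w then 1 else 0) =
    (if Acyc s w then 1 else 0) +
      (if Acyc s (fun i => (span ℝ {u}).mkQ (w i)) then 1 else 0) := by
  rw [acyc_quot hu, acyc_or hu]
  by_cases h1 : AcycU s u w <;> by_cases h2 : AcycU s (-u) w <;> simp [h1, h2]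

lemma rank_contract {ι : Type*} {V : Type*} [AddCommGroup V] [Module ℝ V]
    [FiniteDimensional ℝ V] (v : ι → V) (a : ι) (ha : v a ≠ 0) (S : Set ι) :
    Module.finrank ℝ (span ℝ (v '' (insert a S))) =
      Module.finrank ℝ (span ℝ ((fun i => (span ℝ {v a}).mkQ (v i)) '' S)) + 1 := by
  set W := span ℝ (v '' (insert a S)) with hW
  set q := (span ℝ {v a}).mkQ with hq
  have h1 : span ℝ ((fun i => q (v i)) '' S) = W.map q := by
    rw [hW, Submodule.map_span, ← Set.image_comp, Set.image_insert_eq, Submodule.span_insert]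
    have : (q ∘ v) a = 0 := by simp [hq]
    rw [this]
    simp
  have h2 := LinearMap.finrank_range_add_finrank_ker (q ∘ₗ W.subtype)
  rw [LinearMap.range_comp, Submodule.range_subtype, LinearMap.ker_comp, hq, Submodule.ker_mkQ,
    ← Submodule.finrank_map_subtype_eq, Submodule.map_comap_subtype, inf_eq_right.2,
    finrank_span_singleton ha] at h2
  · rw [h1, ← h2]
  · rw [Submodule.span_le, Set.singleton_subset_iff]
    exact Submodule.subset_span ⟨a, by simp, rfl⟩

open Classical in
lemma main_count {ι : Type*} (s : Finset ι) :
    ∀ {V : Type*} [AddCommGroup V] [Module ℝ V] [FiniteDimensional ℝ V] (v : ι → V),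
    ∑ A ∈ s.powerset, (-1 : ℝ) ^ (A.card + Module.finrank ℝ (span ℝ (v '' (A : Set ι)))) =
    ∑ A ∈ s.powerset, if Acyc s (fun i => if i ∈ A then -v i else v i) then (1:ℝ) else 0 := by
  induction s using Finset.induction_on with
  | empty =>
    intro V _ _ _ v
    have h : span ℝ (v '' ((∅ : Finset ι) : Set ι)) = ⊥ := by
      rw [Finset.coe_empty, Set.image_empty, Submodule.span_empty]
    rw [Finset.powerset_empty, Finset.sum_singleton, Finset.sum_singleton, h, finrank_bot]
    simp [Acyc]
  | insert a s ha ih =>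
    intro V _ _ _ v
    rw [Finset.sum_powerset_insert ha, Finset.sum_powerset_insert ha, ← Finset.sum_add_distrib,
      ← Finset.sum_add_distrib]
    by_cases hv : v a = 0
    · rw [Finset.sum_eq_zero, Finset.sum_eq_zero]
      · intro A hA
        have : ∀ B : Finset ι, ¬ Acyc (insert a s) (fun i => if i ∈ B then -v i else v i) := by
          intro B h
          have := h (fun i => if i = a then 1 else 0) (by intro i; split_ifs <;> simp)
            (Finset.sum_eq_zero (fun i _ => by
              by_cases h : i = a
              · subst h; simp [hv]
              · simp [h])) a (by simp)
          simp at this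
        rw [if_neg (this _), if_neg (this _), add_zero]
      · intro A hA
        have haA : a ∉ A := fun h => ha (Finset.mem_powerset.1 hA h)
        rw [Finset.card_insert_of_notMem haA, Finset.coe_insert, Set.image_insert_eq, hv,
          Submodule.span_insert_zero]
        ring
    · have e1 : ∀ A ∈ s.powerset,
          (-1 : ℝ) ^ (A.card + Module.finrank ℝ (span ℝ (v '' (A : Set ι)))) +
          (-1 : ℝ) ^ ((insert a A).card +
            Module.finrank ℝ (span ℝ (v '' ((insert a A : Finset ι) : Set ι)))) =
          (-1 : ℝ) ^ (A.card + Module.finrank ℝ (span ℝ (v '' (A : Set ι)))) +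
          (-1 : ℝ) ^ (A.card + Module.finrank ℝ
            (span ℝ ((fun i => (span ℝ {v a}).mkQ (v i)) '' (A : Set ι)))) := by
        intro A hA
        have haA : a ∉ A := fun h => ha (Finset.mem_powerset.1 hA h)
        rw [Finset.card_insert_of_notMem haA, Finset.coe_insert, rank_contract v a hv]
        ring
      rw [Finset.sum_congr rfl e1, Finset.sum_add_distrib, ih v,
        ih (fun i => (span ℝ {v a}).mkQ (v i)), ← Finset.sum_add_distrib]
      refine Finset.sum_congr rfl (fun A hA => ?_)
      have haA : a ∉ A := fun h => ha (Finset.mem_powerset.1 hA h)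
      have hne : ∀ i ∈ s, i ≠ a := fun i hi e => ha (e ▸ hi)
      have h0 := acyc_count (s := s) hv (w := fun i => if i ∈ A then -v i else v i)
      have h1 : Acyc (insert a s) (fun i => if i ∈ A then -v i else v i) ↔
          AcycU s (v a) (fun i => if i ∈ A then -v i else v i) := by
        rw [acyc_insert ha]; simp [haA]
      have h2 : Acyc (insert a s) (fun i => if i ∈ insert a A then -v i else v i) ↔
          AcycU s (-v a) (fun i => if i ∈ A then -v i else v i) := by
        rw [acyc_congr (w' := fun i => if i = a then -v a else if i ∈ A then -v i else v i),
          acyc_insert ha]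
        · simp only [if_true]
          unfold AcycU
          have : ∀ c : ι → ℝ, ∑ i ∈ s, c i • (if i = a then -v a else if i ∈ A then -v i else v i)
              = ∑ i ∈ s, c i • (if i ∈ A then -v i else v i) := fun c =>
            Finset.sum_congr rfl (fun i hi => by rw [if_neg (hne i hi)])
          simp only [this]
        · intro i _
          by_cases h : i = a
          · subst h; simp
          · simp [h]
      have h3 : (fun i => (span ℝ {v a}).mkQ (if i ∈ A then -v i else v i)) =
          fun i => if i ∈ A then -(span ℝ {v a}).mkQ (v i) else (span ℝ {v a}).mkQ (v i) := by
        funext i; split_ifs <;> simp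
      simp only [h1, h2]
      rw [h0, h3]

/-- `t(2,0)` counts the subsets `A ⊆ Fin n` whose reorientation `v_A` is acyclic,
i.e. admits no nonzero nonnegative linear dependence. -/
theorem statement9 {n : ℕ} {V : Type*} [AddCommGroup V] [Module ℝ V] [FiniteDimensional ℝ V]
    (v : Fin n → V) :
    tutteV v 2 0 =
      ({A : Finset (Fin n) |
        ¬ ∃ c : Fin n → ℝ, c ≠ 0 ∧ (∀ i, 0 ≤ c i) ∧ (∑ i, c i • reorient v A i) = 0}.ncard : ℝ) := by
  classical
  have key := main_count (Finset.univ : Finset (Fin n)) v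
  rw [Finset.powerset_univ] at key
  have hL : tutteV v 2 0 = ∑ A : Finset (Fin n),
      (-1 : ℝ) ^ (A.card + Module.finrank ℝ (span ℝ (v '' (A : Set (Fin n))))) := by
    unfold tutteV vrank
    refine Finset.sum_congr rfl (fun A _ => ?_)
    have hle : Module.finrank ℝ (span ℝ (v '' (A : Set (Fin n)))) ≤ A.card := by
      have := finrank_span_finset_le_card (R := ℝ) (A.image v)
      rw [Finset.coe_image] at this
      exact this.trans Finset.card_image_le
    obtain ⟨k, hk⟩ := Nat.exists_eq_add_of_le hle
    rw [hk, Nat.add_sub_cancel_left]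
    have : ∀ r : ℕ, r + k + r = k + 2 * r := fun r => by ring
    rw [this, pow_add, pow_mul]
    norm_num
  rw [hL, key, Finset.sum_boole, Set.ncard_eq_toFinset_card']
  congr 2
  ext A
  simp only [Finset.mem_filter, Finset.mem_univ, true_and, Set.mem_toFinset, Set.mem_ofPred_eq]
  unfold Acyc reorient
  constructor
  · rintro h ⟨c, hc, h0, hs⟩
    exact hc (funext fun i => h c h0 (by convert hs) i (Finset.mem_univ i))
  · intro h c h0 hs i _
    by_contra hi
    exact h ⟨c, fun e => hi (by rw [e]; rfl), h0, by convert hs⟩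
end
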